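/- Let G be a finite soluble group with trivial Frattini subgroup, and let V be a chief factor of G and U a nontrivial normal subgroup of G with I_G(V) = R_G(V) × U. Assume V is abelian and non-central in G, let H = H_V = G/C_G(V), q = q_V, n = n_V, δ = δ_V(G), and let α_U be defined as follows: α_U = Σ_{0≤i≤δ−1} q^δ/(q^δ − q^i) if H = 1, and α_U = min{ (δθ + m + q/(q−1))·(1/p_V) , (⌈δθ/n⌉ + q^n/(q^n − 1))·|H| } otherwise, where θ = 0 if δ = 1 and θ = 1 otherwise, and m = dim_{End_G(V)} H^1(H,V). Then α_U/√|G| < (5/3)·(√|U| − 1)/√|U|, except when |H| < |V| and one of the following holds: (1) δ = 2, q^n = 4 and |R_G(V)| = 1; (2) δ = 2, q^n = 3 and |R_G(V)| ≤ 2; (3) δ = 1, 4 ≤ q^n ≤ 7 and |R_G(V)| = 1; (4) δ = 1, q^n = 3 and |R_G(V)| ≤ 3. -/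

import Mathlib

/-!
Definitions supporting the formalization of
"An upper bound on the Chebotarev invariant of a finite group" (Lucchini–Tracey).
-/

open scoped BigOperators

namespace ChebotarevPaper

/-- A `k`-tuple of elements of `G` invariably generates `G` if, replacing each entry by an
arbitrary conjugate, the resulting elements always generate `G`. -/
def InvGen (G : Type*) [Group G] {k : ℕ} (f : Fin k → G) : Prop :=
  ∀ c : Fin k → G, Subgroup.closure (Set.range fun i => c i * f i * (c i)⁻¹) = ⊤

/-- The probability that `k` independent uniformly random elements of `G` invariably
generate `G`. -/
noncomputable def probInvGen (G : Type*) [Group G] (k : ℕ) : ℝ :=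
  Nat.card {f : Fin k → G // InvGen G f} / (Nat.card G : ℝ) ^ k

/-- The Chebotarev invariant `C(G)`:  `C(G) = Σ_{k ≥ 0} (1 − P_I(G,k))`, where `P_I(G,k)`
is the probability that `k` independent uniformly random elements of `G` invariably
generate `G`. -/
noncomputable def cheb (G : Type*) [Group G] : ℝ :=
  ∑' k : ℕ, (1 - probInvGen G k)

/-- The probability that `k` independent uniformly random elements of `G` generate `G`. -/
noncomputable def probGen (G : Type*) [Group G] (k : ℕ) : ℝ :=
  Nat.card {f : Fin k → G // Subgroup.closure (Set.range f) = ⊤} / (Nat.card G : ℝ) ^ k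

/-- The expected number of uniformly random elements of `G` needed to generate `G`. -/
noncomputable def expectedGen (G : Type*) [Group G] : ℝ :=
  ∑' k : ℕ, (1 - probGen G k)

/-- `d(G)`: the minimal number of generators of `G`. -/
noncomputable def minGen (G : Type*) [Group G] : ℕ :=
  sInf {n | ∃ f : Fin n → G, Subgroup.closure (Set.range f) = ⊤}

/-- `σ` has the defining property of the constant `σ = 2.118456563…` of Pomerance:
for every finite group `X`, the expected number of uniformly random elements needed to
generate `X` is at most `d(X) + σ`. -/
def IsPomeranceConst (σ : ℝ) : Prop :=
  ∀ (X : Type) [Group X] [Finite X], expectedGen X ≤ minGen X + σ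

variable (G : Type*) [Group G]

/-- `(X, Y)` is a chief factor of `G`:  both are normal in `G`, `Y < X`, and no normal
subgroup of `G` lies strictly between them (i.e. `X/Y` is a minimal normal subgroup of
`G/Y`). -/
def IsChiefFactorPair (X Y : Subgroup G) : Prop :=
  X.Normal ∧ Y.Normal ∧ Y < X ∧
    ∀ N : Subgroup G, N.Normal → Y ≤ N → N ≤ X → N = Y ∨ N = X

/-- The chief factor `X/Y` is complemented: there is `U ≤ G` with `UX = G` and
`U ⊓ X = Y`. -/
def IsComplementedFactor (X Y : Subgroup G) : Prop :=
  ∃ U : Subgroup G, U ⊔ X = ⊤ ∧ U ⊓ X = Y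

/-- The chief factor `X/Y` is a Frattini chief factor, i.e. `X/Y ≤ Frat(G/Y)`;
equivalently (and this is how we state it), `X/Y` is abelian and has no complement
in `G`. -/
def IsFrattiniFactor (X Y : Subgroup G) : Prop :=
  (∀ a b : G, a ∈ X → b ∈ X → a * b * a⁻¹ * b⁻¹ ∈ Y) ∧ ¬ IsComplementedFactor G X Y

/-- The chief factor `X/Y` is central in `G`, i.e. `X/Y ≤ Z(G/Y)`. -/
def IsCentralFactor (X Y : Subgroup G) : Prop :=
  ∀ g x : G, x ∈ X → g * x * g⁻¹ * x⁻¹ ∈ Y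

/-- The `G`-group `V` (a group with an action `a : G →* MulAut V` of `G` by automorphisms)
is `G`-isomorphic to the chief factor `X/Y` (on which `G` acts by conjugation): there is a
surjective homomorphism `X →* V` with kernel `Y` transforming conjugation by `g ∈ G` into
the action of `g` on `V`. -/
def RepresentsFactor {V : Type*} [Group V] (a : G →* MulAut V) (X Y : Subgroup G) : Prop :=
  ∃ f : X →* V, Function.Surjective f ∧ (∀ x : X, f x = 1 ↔ (x : G) ∈ Y) ∧
    ∀ (g : G) (x y : X), (y : G) = g * (x : G) * g⁻¹ → f y = a g (f x)

/-- Two `G`-groups `(V₁, a₁)`, `(V₂, a₂)` are `G`-equivalent: there are isomorphisms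
`φ : V₁ ≃* V₂` and `Φ : V₁ ⋊ G ≃* V₂ ⋊ G` making the natural diagram of the two
extensions `1 → Vᵢ → Vᵢ ⋊ G → G → 1` commute. -/
def GEquiv {V₁ V₂ : Type*} [Group V₁] [Group V₂]
    (a₁ : G →* MulAut V₁) (a₂ : G →* MulAut V₂) : Prop :=
  ∃ (φ : V₁ ≃* V₂) (Φ : (V₁ ⋊[a₁] G) ≃* (V₂ ⋊[a₂] G)),
    (∀ v : V₁, Φ (SemidirectProduct.inl v) = SemidirectProduct.inl (φ v)) ∧
    ∀ x, (Φ x).right = x.right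

/-- `G`-isomorphism of `G`-groups. -/
def GIso {V₁ V₂ : Type*} [Group V₁] [Group V₂]
    (a₁ : G →* MulAut V₁) (a₂ : G →* MulAut V₂) : Prop :=
  ∃ φ : V₁ ≃* V₂, ∀ (g : G) (v : V₁), φ (a₁ g v) = a₂ g (φ v)

/-- `N` is a minimal normal subgroup of `G`. -/
def IsMinimalNormal (N : Subgroup G) : Prop :=
  N.Normal ∧ N ≠ ⊥ ∧ ∀ M : Subgroup G, M.Normal → M ≠ ⊥ → M ≤ N → M = N

/-- The socle of `G`: the subgroup generated by all minimal normal subgroups of `G`. -/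
def socle : Subgroup G := sSup {N : Subgroup G | IsMinimalNormal G N}

instance socle_normal : (socle G).Normal := by
  constructor
  intro n hn g
  have h : socle G ≤ (socle G).comap (MulAut.conj g).toMonoidHom := by
    rw [socle]
    apply sSup_le
    intro N hN x hx
    have h1 : (MulAut.conj g).toMonoidHom x ∈ N := by
      simpa [MulAut.conj_apply] using hN.1.conj_mem x hx g
    exact Subgroup.mem_comap.2 (le_sSup hN h1)
  have h2 := h hn
  simpa [MulAut.conj_apply] using h2

/-- The action of `G` (by conjugation, through `f : G →* Q`) on the socle of `Q`. -/
def socAct {Q : Type*} [Group Q] (f : G →* Q) : G →* MulAut (socle Q) :=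
  MulAut.conjNormal.comp f

/-- The diagonal action of `G` on `V × V` induced by an action on `V`. -/
def prodAct {V : Type*} [Group V] (a : G →* MulAut V) : G →* MulAut (V × V) where
  toFun g := MulEquiv.prodCongr (a g) (a g)
  map_one' := by
    ext x <;> simp [MulEquiv.prodCongr, MulAut.one_apply]
  map_mul' g h := by
    ext x <;> simp [MulEquiv.prodCongr, MulAut.mul_apply]

/-- The diagonal action of `H` on `V^u` induced by an action on `V`. -/
def diagAct (H : Type*) [Group H] {V : Type*} [Group V] (b : H →* MulAut V) (u : ℕ) :
    H →* MulAut (Fin u → V) where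
  toFun g := MulEquiv.piCongrRight fun _ => b g
  map_one' := by
    ext x i; simp
  map_mul' g h := by
    ext x i; simp [MulAut.mul_apply]

variable {G}

/-- The elements `gs 0, …, gs (k-1)` of `G` satisfy the `V`-property in `G`: they all lie
in the union of the `G`-conjugates of some maximal subgroup `M` of `G` such that the socle
of `G/core_G(M)` is `G`-equivalent to `V` or to `V × V`. -/
def SatisfyVProperty {V : Type*} [Group V] (a : G →* MulAut V) {k : ℕ}
    (gs : Fin k → G) : Prop :=
  ∃ M : Subgroup G, IsCoatom M ∧
    (GEquiv G (socAct G (QuotientGroup.mk' M.normalCore)) a ∨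
      GEquiv G (socAct G (QuotientGroup.mk' M.normalCore)) (prodAct G a)) ∧
    ∀ i, ∃ x : G, x * gs i * x⁻¹ ∈ M

/-- `P*_{G,V}(k)`: the probability that `k` independent uniformly random elements of `G`
satisfy the `V`-property in `G`. -/
noncomputable def pStar {V : Type*} [Group V] (a : G →* MulAut V) (k : ℕ) : ℝ :=
  Nat.card {gs : Fin k → G // SatisfyVProperty a gs} / (Nat.card G : ℝ) ^ k

/-- The collection of normal subgroups `N` of `G` such that `G/N` is isomorphic to the
monolithic primitive group `L_V` associated to `V` (that is, `V ⋊ (G/C_G(V))` if `V` is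
abelian and `G/C_G(V)` otherwise; here `C_G(V)` is the kernel of the action of `G` on
`V`) and the socle of `G/N` is `G`-equivalent to `V`. -/
def crownNormals {V : Type*} [Group V] (a : G →* MulAut V) : Set (Subgroup G) :=
  {N | ∃ _ : N.Normal,
    ((∀ x y : V, x * y = y * x) →
      Nonempty ((G ⧸ N) ≃* (V ⋊[QuotientGroup.kerLift a] (G ⧸ a.ker)))) ∧
    (¬ (∀ x y : V, x * y = y * x) → Nonempty ((G ⧸ N) ≃* (G ⧸ a.ker))) ∧
    GEquiv G (socAct G (QuotientGroup.mk' N)) a}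

/-- `R_G(V)`: the intersection of all normal subgroups `N` of `G` with `G/N ≅ L_V` and
`soc(G/N)` `G`-equivalent to `V`. -/
def crownRadical {V : Type*} [Group V] (a : G →* MulAut V) : Subgroup G :=
  sInf (crownNormals a)

instance crownRadical_normal {V : Type*} [Group V] (a : G →* MulAut V) :
    (crownRadical a).Normal := by
  constructor
  intro n hn g
  rw [crownRadical, Subgroup.mem_sInf] at hn ⊢
  intro p hp
  obtain ⟨hpN, hrest⟩ := hp
  exact hpN.conj_mem n (hn p ⟨hpN, hrest⟩) g

/-- `I_G(V)`: the preimage in `G` of the socle of `G/R_G(V)`; the `V`-crown of `G` is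
`I_G(V)/R_G(V)`. -/
def crownSocle {V : Type*} [Group V] (a : G →* MulAut V) : Subgroup G :=
  (socle (G ⧸ crownRadical a)).comap (QuotientGroup.mk' (crownRadical a))

/-- A chief series of `G`: a chain `⊥ = N_0 < N_1 < … < N_len = ⊤` of normal subgroups
of `G` in which each factor `N_{i+1}/N_i` is a chief factor of `G`. -/
structure ChiefSeries (G : Type*) [Group G] where
  len : ℕ
  ser : Fin (len + 1) → Subgroup G
  bot_eq : ser 0 = ⊥
  top_eq : ser (Fin.last len) = ⊤
  chief : ∀ i : Fin len, IsChiefFactorPair G (ser i.succ) (ser i.castSucc)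

/-- `δ_V(G)` (for a `G`-module `V`): the number of complemented factors in the chief
series `S` of `G` which are `G`-isomorphic to `V`. -/
noncomputable def deltaIso {V : Type*} [Group V] (a : G →* MulAut V)
    (S : ChiefSeries G) : ℕ :=
  Nat.card {i : Fin S.len //
    IsComplementedFactor G (S.ser i.succ) (S.ser i.castSucc) ∧
    RepresentsFactor G a (S.ser i.succ) (S.ser i.castSucc)}

/-- The chief factor `X/Y` of `G` is `G`-equivalent to the `G`-group `(V, a)`. -/
def FactorGEquiv (X Y : Subgroup G) {V : Type*} [Group V] (a : G →* MulAut V) : Prop :=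
  ∃ (W : Type) (_ : Group W) (b : G →* MulAut W),
    RepresentsFactor G b X Y ∧ GEquiv G b a

/-- `δ_V(G)` (for a `G`-group `V`): the number of non-Frattini factors in the chief
series `S` of `G` which are `G`-equivalent to `V`. -/
noncomputable def deltaEquiv {V : Type*} [Group V] (a : G →* MulAut V)
    (S : ChiefSeries G) : ℕ :=
  Nat.card {i : Fin S.len //
    ¬ IsFrattiniFactor G (S.ser i.succ) (S.ser i.castSucc) ∧
    FactorGEquiv (S.ser i.succ) (S.ser i.castSucc) a}

/-- Bundled `G`-group: a group together with an action of `G` by automorphisms. -/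
structure GGroup (G : Type) [Group G] : Type 1 where
  carrier : Type
  [grp : Group carrier]
  act : G →* MulAut carrier

attribute [instance] GGroup.grp

/-- The action `b` of `H` on `V` is irreducible: `V` is nontrivial and has no proper
nontrivial (normal) `H`-invariant subgroup. -/
def IsIrreducibleGGroup (H : Type*) [Group H] {V : Type*} [Group V]
    (b : H →* MulAut V) : Prop :=
  Nontrivial V ∧
    ∀ W : Subgroup V, W.Normal → (∀ (h : H) (v : V), v ∈ W → b h v ∈ W) → W = ⊥ ∨ W = ⊤

/-- The `H`-equivariant endomorphisms of `V` (for `H`-modules `V` this is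
`End_H(V)`). -/
def EquivEnd (H : Type*) [Group H] {V : Type*} [Group V] (b : H →* MulAut V) :=
  {f : V →* V // ∀ (h : H) (v : V), f (b h v) = b h (f v)}

/-- `q_V := |End_H(V)|`. -/
noncomputable def endCard (H : Type*) [Group H] {V : Type*} [Group V]
    (b : H →* MulAut V) : ℕ :=
  Nat.card (EquivEnd H b)

/-- `n_V := dim_{End_H(V)} V`, characterised by `|End_H(V)| ^ n_V = |V|` (for a finite
irreducible `H`-module `V`, `End_H(V)` is a field and `V` a vector space over it). -/
noncomputable def dimEnd (H : Type*) [Group H] {V : Type*} [Group V]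
    (b : H →* MulAut V) : ℕ :=
  sInf {n : ℕ | endCard H b ^ n = Nat.card V}

/-- The set of derivations `ζ : H → V` (satisfying `ζ(h₁h₂) = ζ(h₁)^{h₂} · ζ(h₂)`). -/
def DerSet (H : Type*) [Group H] {V : Type*} [Group V] (b : H →* MulAut V) :
    Set (H → V) :=
  {ζ | ∀ h₁ h₂ : H, ζ (h₁ * h₂) = b h₂ (ζ h₁) * ζ h₂}

/-- The set of inner derivations `h ↦ [h,v] = v^h · v⁻¹`. -/
def IderSet (H : Type*) [Group H] {V : Type*} [Group V] (b : H →* MulAut V) :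
    Set (H → V) :=
  {ζ | ∃ v : V, ∀ h : H, ζ h = b h v * v⁻¹}

/-- `m := dim_{End_H(V)} H¹(H,V)` where `H¹(H,V) = Der(H,V)/Ider(H,V)`, characterised by
`|End_H(V)| ^ m · |Ider(H,V)| = |Der(H,V)|`. -/
noncomputable def h1Dim (H : Type*) [Group H] {V : Type*} [Group V]
    (b : H →* MulAut V) : ℕ :=
  sInf {m : ℕ | endCard H b ^ m * Nat.card (IderSet H b) = Nat.card (DerSet H b)}

/-- The probability that a uniformly random element of `H` fixes a nonzero (i.e.
non-identity) vector of `V`. -/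
noncomputable def fixProb (H : Type*) [Group H] {V : Type*} [Group V]
    (b : H →* MulAut V) : ℝ :=
  Nat.card {h : H // ∃ v : V, v ≠ 1 ∧ b h v = v} / (Nat.card H : ℝ)

/-- `A` is a set of representatives for the irreducible `G`-modules which are
`G`-isomorphic to a chief factor of `G` satisfying `P`:  every member of `A` is an
irreducible abelian `G`-group `G`-isomorphic to some chief factor satisfying `P`, and
every chief factor of `G` satisfying `P` is `G`-isomorphic to exactly one member
of `A`. -/
def IsModuleRepSet {G : Type} [Group G] (P : Subgroup G → Subgroup G → Prop)
    (A : Finset (GGroup G)) : Prop :=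
  (∀ V ∈ A, (∀ x y : V.carrier, x * y = y * x) ∧ IsIrreducibleGGroup G V.act ∧
      ∃ X Y : Subgroup G, IsChiefFactorPair G X Y ∧ P X Y ∧ RepresentsFactor G V.act X Y) ∧
  ∀ X Y : Subgroup G, IsChiefFactorPair G X Y → P X Y →
    ∃! V : GGroup G, V ∈ A ∧ RepresentsFactor G V.act X Y

/-- `A` is a set of representatives for the irreducible `G`-groups which are
`G`-equivalent to a chief factor of `G` satisfying `P`. -/
def IsGGroupRepSet {G : Type} [Group G] (P : Subgroup G → Subgroup G → Prop)
    (A : Finset (GGroup G)) : Prop :=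
  (∀ V ∈ A, IsIrreducibleGGroup G V.act ∧
      ∃ X Y : Subgroup G, IsChiefFactorPair G X Y ∧ P X Y ∧ FactorGEquiv X Y V.act) ∧
  ∀ X Y : Subgroup G, IsChiefFactorPair G X Y → P X Y →
    ∃! V : GGroup G, V ∈ A ∧ FactorGEquiv X Y V.act

/-!
Write `Q = |V| = qⁿ`, `H = G/C_G(V)` and `R = R_G(V)`. The subgroup `I_G(V)` is `C_G(V)`, and every
complemented factor of a chief series that is isomorphic to `V` survives modulo `R`, so
`Q ^ δ ≤ |C_G(V) : R| = |U|` and `|G| = |H||R||U|`. It therefore suffices to prove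
`α_U < (5/3)(Q^(δ/2) - 1)√(|H||R|)`.

If `|H| < Q`, bound `α_U` by `(δθ + Q/(Q - 1))|H|`. If `|H| ≥ Q`, no stabilizer of a nonzero vector
is trivial, because orbits of nonzero vectors have at most `Q - 1` elements. So at least
`|H|/(Q - 1)` elements of `H` fix a nonzero vector, and four such elements are `1`, some `x ≠ 1`,
some `y ≠ 1` fixing a vector moved by `x`, and some `z ≠ 1` fixing a vector moved by both `x` and
`y`. Hence `1/p_V ≤ min (Q - 1) (|H|/4)`, and `α_U ≤ (δθ + 2)/p_V` because `m = 0`.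
-/

open scoped commutatorElement

section Factors

variable {V : Type*} [Group V] {a : G →* MulAut V} {X Y : Subgroup G}

namespace RepresentsFactor

theorem le_ker_iff [X.Normal] (hr : RepresentsFactor G a X Y) {L : Subgroup G} :
    L ≤ a.ker ↔ ⁅L, X⁆ ≤ Y := by
  obtain ⟨f, hf, hker, hconj⟩ := hr
  have fixes_iff (l : G) (x : X) : a l (f x) = f x ↔ ⁅l, (x : G)⁆ ∈ Y := by
    rw [← hconj l x ⟨l * x * l⁻¹, Subgroup.Normal.conj_mem ‹_› _ x.2 l⟩ rfl, ← mul_inv_eq_one,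
      ← map_inv, ← map_mul, hker]
    rfl
  rw [Subgroup.commutator_le]
  refine ⟨fun h l hl x hx => (fixes_iff l ⟨x, hx⟩).1 (by rw [MonoidHom.mem_ker.1 (h hl)]; rfl),
    fun h l hl => MulEquiv.ext fun v => ?_⟩
  obtain ⟨x, rfl⟩ := hf v
  exact (fixes_iff l x).2 (h l hl x x.2)

theorem le_ker_of_inf_le [X.Normal] (hr : RepresentsFactor G a X Y) {L : Subgroup G} [L.Normal]
    (h : L ⊓ X ≤ Y) : L ≤ a.ker :=
  hr.le_ker_iff.2 ((Subgroup.commutator_le_inf L X).trans h)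

theorem relIndex_eq (hr : RepresentsFactor G a X Y) : Y.relIndex X = Nat.card V := by
  obtain ⟨f, hf, hker, -⟩ := hr
  have hfker : f.ker = Y.subgroupOf X := Subgroup.ext hker
  rw [Subgroup.relIndex, ← hfker, Subgroup.index_ker, MonoidHom.range_eq_top.2 hf,
    Subgroup.card_top]

theorem finite [Finite X] (hr : RepresentsFactor G a X Y) : Finite V := by
  obtain ⟨f, hf, -⟩ := hr
  exact .of_surjective f hf

theorem ne_one [X.Normal] (hr : RepresentsFactor G a X Y) (hnc : ¬ IsCentralFactor G X Y) :
    a ≠ 1 := by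
  rintro rfl
  refine hnc fun g x hx => hr.le_ker_iff.1 ?_
    (Subgroup.commutator_mem_commutator (Subgroup.mem_top g) hx)
  exact MonoidHom.ker_one.ge

theorem isIrreducibleGGroup (hr : RepresentsFactor G a X Y) (hc : IsChiefFactorPair G X Y) :
    IsIrreducibleGGroup G a := by
  obtain ⟨f, hf, hker, hconj⟩ := hr
  obtain ⟨hX, -, hlt, hmin⟩ := hc
  have mem_map (W : Subgroup V) (x : X) : (x : G) ∈ (W.comap f).map X.subtype ↔ f x ∈ W := by
    simp
  refine ⟨?_, fun W _ hW => ?_⟩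
  · obtain ⟨x, hxX, hxY⟩ := SetLike.exists_of_lt hlt
    exact ⟨f ⟨x, hxX⟩, 1, fun h => hxY ((hker ⟨x, hxX⟩).1 h)⟩
  have hle : (W.comap f).map X.subtype ≤ X := Subgroup.map_subtype_le _
  have hnormal : ((W.comap f).map X.subtype).Normal := by
    refine ⟨fun x hx g => ?_⟩
    lift x to X using hle hx
    lift g * x * g⁻¹ to X using hX.conj_mem x x.2 g with y hy
    rw [mem_map] at hx ⊢
    exact hconj g x y hy ▸ hW g _ hx
  have hYle : Y ≤ (W.comap f).map X.subtype := by
    intro y hy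
    lift y to X using hlt.le hy
    rw [mem_map, (hker y).2 hy]
    exact one_mem W
  rcases hmin _ hnormal hYle hle with h | h
  · refine .inl (eq_bot_iff.2 fun v hv => ?_)
    obtain ⟨x, rfl⟩ := hf v
    exact (hker x).2 (h ▸ (mem_map W x).2 hv)
  · refine .inr (eq_top_iff.2 fun v _ => ?_)
    obtain ⟨x, rfl⟩ := hf v
    exact (mem_map W x).1 (h.ge x.2)

theorem isChiefFactorPair [X.Normal] [Y.Normal] (hr : RepresentsFactor G a X Y) (hle : Y ≤ X)
    (hirr : IsIrreducibleGGroup G a) : IsChiefFactorPair G X Y := by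
  obtain ⟨f, hf, hker, hconj⟩ := hr
  obtain ⟨hnontriv, hirr⟩ := hirr
  have mem_map {N : Subgroup G} (hYN : Y ≤ N) (x : X) :
      f x ∈ (N.subgroupOf X).map f ↔ (x : G) ∈ N := by
    refine ⟨fun ⟨n, hn, hnx⟩ => ?_, fun hx => ⟨x, hx, rfl⟩⟩
    have : f (x * n⁻¹) = 1 := by rw [map_mul, map_inv, hnx, mul_inv_cancel]
    exact (Subgroup.mul_mem_cancel_right N (N.inv_mem hn)).1 (hYN ((hker _).1 this))
  refine ⟨‹_›, ‹_›, lt_of_le_of_ne hle ?_, fun N hN hYN hNX => ?_⟩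
  · rintro rfl
    obtain ⟨v, hv⟩ := exists_ne (1 : V)
    obtain ⟨y, rfl⟩ := hf v
    exact hv ((hker y).2 y.2)
  have hinv (g : G) (v : V) (hv : v ∈ (N.subgroupOf X).map f) :
      a g v ∈ (N.subgroupOf X).map f := by
    obtain ⟨x, rfl⟩ := hf v
    rw [← hconj g x ⟨g * x * g⁻¹, Subgroup.Normal.conj_mem ‹_› _ x.2 g⟩ rfl, mem_map hYN]
    exact hN.conj_mem _ ((mem_map hYN x).1 hv) g
  rcases hirr _ (.map inferInstance f hf) hinv with h | h
  · refine .inl (le_antisymm (fun n hn => ?_) hYN)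
    lift n to X using hNX hn
    have : f n ∈ (N.subgroupOf X).map f := (mem_map hYN n).2 hn
    rw [h] at this
    exact (hker n).1 this
  · refine .inr (le_antisymm hNX fun x hx => (mem_map hYN ⟨x, hx⟩).1 ?_)
    rw [h]
    trivial

end RepresentsFactor

theorem representsFactor_iff_exists_embedding [X.Normal] [Y.Normal] :
    RepresentsFactor G a X Y ↔ ∃ j : V →* G ⧸ Y, Function.Injective j ∧
      j.range = X.map (QuotientGroup.mk' Y) ∧ ∀ g v, j (a g v) = g * j v * (g : G ⧸ Y)⁻¹ := by
  constructor
  · rintro ⟨f, hf, hker, hconj⟩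
    let p : X →* G ⧸ Y := (QuotientGroup.mk' Y).comp X.subtype
    have hp (x : X) : p x = 1 ↔ f x = 1 := by simp [p, hker]
    let j : V →* G ⧸ Y := f.liftOfSurjective hf ⟨p, fun x => (hp x).2⟩
    have hj (x : X) : j (f x) = p x := f.liftOfRightInverse_comp_apply _ _ ⟨p, _⟩ x
    refine ⟨j, (injective_iff_map_eq_one j).2 fun v hv => ?_, ?_, fun g v => ?_⟩
    · obtain ⟨x, rfl⟩ := hf v
      exact (hp x).1 (hj x ▸ hv)
    · calc j.range = (j.comp f).range := by
            rw [MonoidHom.range_comp, MonoidHom.range_eq_top.2 hf, MonoidHom.range_eq_map]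
        _ = p.range := congrArg MonoidHom.range (MonoidHom.ext hj)
        _ = X.map (QuotientGroup.mk' Y) := by rw [MonoidHom.range_comp, Subgroup.range_subtype]
    · obtain ⟨x, rfl⟩ := hf v
      rw [← hconj g x ⟨g * x * g⁻¹, Subgroup.Normal.conj_mem ‹_› _ x.2 g⟩ rfl, hj, hj]
      rfl
  · rintro ⟨j, hj, hrange, hconj⟩
    let f : X →* V := (MonoidHom.ofInjective hj).symm.toMonoidHom.comp
      (((QuotientGroup.mk' Y).comp X.subtype).codRestrict j.range fun x =>
        hrange ▸ Subgroup.mem_map_of_mem _ x.2)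
    have hjf (x : X) : j (f x) = (x : G) := MonoidHom.apply_ofInjective_symm hj _
    refine ⟨f, fun v => ?_, fun x => ?_, fun g x y hy => hj ?_⟩
    · obtain ⟨x, hx, hxv⟩ := hrange.le ⟨v, rfl⟩
      exact ⟨⟨x, hx⟩, hj ((hjf _).trans hxv)⟩
    · rw [← map_eq_one_iff j hj, hjf, QuotientGroup.eq_one_iff]
    · rw [hconj, hjf, hjf, hy]
      rfl

theorem representsFactor_sup_iff [X.Normal] [Y.Normal] :
    RepresentsFactor G a (X ⊔ Y) Y ↔ RepresentsFactor G a X (X ⊓ Y) := by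
  constructor
  · rintro ⟨f, hf, hker, hconj⟩
    refine ⟨f.comp (Subgroup.inclusion le_sup_left), fun v => ?_, fun x => ?_, fun g x y hy =>
      hconj g (Subgroup.inclusion le_sup_left x) _ hy⟩
    · obtain ⟨⟨z, hz⟩, rfl⟩ := hf v
      obtain ⟨x, hx, y, hy, rfl⟩ := Subgroup.mem_sup_of_normal_left.1 hz
      have : f ⟨y, Subgroup.mem_sup_right hy⟩ = 1 := (hker _).2 hy
      refine ⟨⟨x, hx⟩, ?_⟩
      rw [← mul_one (f.comp _ _), ← this]
      exact (map_mul f _ _).symm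
    · rw [MonoidHom.comp_apply, hker]
      exact ⟨fun hx => ⟨x.2, hx⟩, fun hx => hx.2⟩
  · rw [representsFactor_iff_exists_embedding, representsFactor_iff_exists_embedding]
    rintro ⟨j, hj, hrange, hconj⟩
    let p : G ⧸ (X ⊓ Y) →* G ⧸ Y := QuotientGroup.map (X ⊓ Y) Y (MonoidHom.id G) inf_le_right
    refine ⟨p.comp j, (injective_iff_map_eq_one _).2 fun v hv => ?_, ?_, fun g v => ?_⟩
    · obtain ⟨x, hx, hxv⟩ := hrange.le ⟨v, rfl⟩
      rw [MonoidHom.comp_apply, ← hxv] at hv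
      have hxY : x ∈ Y := (QuotientGroup.eq_one_iff x).1 hv
      rw [← map_eq_one_iff j hj, ← hxv]
      exact (QuotientGroup.eq_one_iff x).2 ⟨hx, hxY⟩
    · rw [MonoidHom.range_comp, hrange, Subgroup.map_map, Subgroup.map_sup,
        QuotientGroup.map_mk'_self, sup_bot_eq]
      rfl
    · rw [MonoidHom.comp_apply, hconj, map_mul, map_mul, map_inv]
      rfl

end Factors

section Socle

variable {R P K : Subgroup G} [R.Normal]

open QuotientGroup in
theorem isMinimalNormal_quotient_iff {M : Subgroup (G ⧸ R)} :
    IsMinimalNormal (G ⧸ R) M ↔ IsChiefFactorPair G (M.comap (mk' R)) R := by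
  have hsurj := mk'_surjective R
  have comap_bot : (⊥ : Subgroup (G ⧸ R)).comap (mk' R) = R := by
    rw [MonoidHom.comap_bot, ker_mk']
  constructor
  · rintro ⟨hM, hM0, hmin⟩
    refine ⟨hM.comap _, inferInstance, ?_, fun N hN hRN hNM => ?_⟩
    · exact comap_bot.symm.trans_lt
        ((Subgroup.comap_lt_comap_of_surjective hsurj).2 (bot_lt_iff_ne_bot.2 hM0))
    · have hcomap : (N.map (mk' R)).comap (mk' R) = N :=
        Subgroup.comap_map_eq_self ((ker_mk' R).trans_le hRN)
      rcases eq_or_ne (N.map (mk' R)) ⊥ with h | h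
      · exact .inl (by rw [← hcomap, h, comap_bot])
      · have hmap := hmin _ (hN.map _ hsurj) h (Subgroup.map_le_iff_le_comap.2 hNM)
        exact .inr (by rw [← hcomap, hmap])
  · rintro ⟨hM, -, hlt, hmin⟩
    refine ⟨Subgroup.map_comap_eq_self_of_surjective hsurj M ▸ hM.map _ hsurj, ?_,
      fun N hN hN0 hNM => ?_⟩
    · rintro rfl
      exact hlt.ne comap_bot.symm
    · rcases hmin (N.comap (mk' R)) (hN.comap _) (comap_bot.ge.trans (Subgroup.comap_mono bot_le))
        (Subgroup.comap_mono hNM) with h | h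
      · exact absurd (Subgroup.comap_injective hsurj (h.trans comap_bot.symm)) hN0
      · exact Subgroup.comap_injective hsurj h

theorem IsChiefFactorPair.le_comap_socle (h : IsChiefFactorPair G P R) :
    P ≤ (socle (G ⧸ R)).comap (QuotientGroup.mk' R) := by
  have hP : (P.map (QuotientGroup.mk' R)).comap (QuotientGroup.mk' R) = P :=
    Subgroup.comap_map_eq_self ((QuotientGroup.ker_mk' R).trans_le h.2.2.1.le)
  exact Subgroup.map_le_iff_le_comap.1 (le_sSup (isMinimalNormal_quotient_iff.2 (hP.symm ▸ h)))

theorem comap_socle_le (hRK : R ≤ K) (h : ∀ P, IsChiefFactorPair G P R → P ≤ K) :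
    (socle (G ⧸ R)).comap (QuotientGroup.mk' R) ≤ K := by
  have hK : (K.map (QuotientGroup.mk' R)).comap (QuotientGroup.mk' R) = K :=
    Subgroup.comap_map_eq_self ((QuotientGroup.ker_mk' R).trans_le hRK)
  rw [← hK]
  refine Subgroup.comap_mono (sSup_le fun M hM => ?_)
  rw [← Subgroup.map_comap_eq_self_of_surjective (QuotientGroup.mk'_surjective R) M]
  exact Subgroup.map_mono (h _ (isMinimalNormal_quotient_iff.1 hM))

theorem RepresentsFactor.comap_socle_le {V : Type*} [Group V] {a : G →* MulAut V} {N : Subgroup G}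
    (hr : RepresentsFactor G a a.ker N) (hRN : R ≤ N) (hR : R ≤ a.ker) :
    (socle (G ⧸ R)).comap (QuotientGroup.mk' R) ≤ a.ker := by
  refine ChebotarevPaper.comap_socle_le hR fun P ⟨hP, _, hlt, hmin⟩ => ?_
  rcases hmin (P ⊓ a.ker) inferInstance (le_inf hlt.le hR) inf_le_left with h | h
  · exact hr.le_ker_of_inf_le (h.trans_le hRN)
  · exact inf_eq_left.1 h

end Socle

theorem gequiv_iff_giso {V W : Type*} [Group W] [CommGroup V] {b : G →* MulAut W}
    {a : G →* MulAut V} : GEquiv G b a ↔ GIso G b a := by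
  constructor
  · rintro ⟨φ, Φ, hφ, hΦ⟩
    refine ⟨φ, fun g w => SemidirectProduct.inl_injective (φ := a) ?_⟩
    have hinr : Φ (.inr g) = .inl (Φ (.inr g)).left * .inr g := by
      conv_lhs => rw [← SemidirectProduct.inl_left_mul_inr_right (Φ (.inr g)), hΦ]
      rw [SemidirectProduct.right_inr]
    calc SemidirectProduct.inl (φ (b g w))
      _ = Φ (.inr g) * .inl (φ w) * (Φ (.inr g))⁻¹ := by
        simp only [← hφ, SemidirectProduct.inl_aut, map_mul, map_inv]
      _ = .inl (Φ (.inr g)).left * .inl (a g (φ w)) * (.inl (Φ (.inr g)).left)⁻¹ := by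
        rw [hinr, SemidirectProduct.inl_aut]
        simp [mul_assoc]
      _ = .inl (a g (φ w)) := by
        rw [← map_inv, ← map_mul, ← map_mul, mul_inv_cancel_comm]
  · rintro ⟨φ, hφ⟩
    refine ⟨φ, SemidirectProduct.congr φ (MulEquiv.refl G) fun g => MulEquiv.ext (hφ g),
      fun w => ?_, fun x => rfl⟩
    ext <;> simp [SemidirectProduct.congr]

theorem isComplementedFactor_of_surjective {V H : Type*} [Group V] [Group H] {b : H →* MulAut V}
    {θ : G →* V ⋊[b] H} (hθ : Function.Surjective θ) :
    IsComplementedFactor G (SemidirectProduct.rightHom.comp θ).ker θ.ker := by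
  refine ⟨(SemidirectProduct.inr (φ := b)).range.comap θ, eq_top_iff.2 fun g _ => ?_, ?_⟩
  · obtain ⟨p, hp⟩ := hθ (.inl (θ g).left)
    rw [← mul_inv_cancel_left p g]
    refine mul_mem (Subgroup.mem_sup_right ?_) (Subgroup.mem_sup_left ⟨(θ g).right, ?_⟩)
    · rw [MonoidHom.mem_ker, MonoidHom.comp_apply, hp, SemidirectProduct.rightHom_inl]
    · rw [map_mul, map_inv, hp, eq_inv_mul_iff_mul_eq, SemidirectProduct.inl_left_mul_inr_right]
  · refine Subgroup.ext fun g => ⟨fun ⟨⟨h, hh⟩, (hg : _ = _)⟩ => ?_,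
      fun (hg : _ = _) => ⟨⟨1, ?_⟩, ?_⟩⟩
    · rw [MonoidHom.comp_apply, ← hh, SemidirectProduct.rightHom_inr] at hg
      rw [MonoidHom.mem_ker, ← hh, hg, map_one]
    · rw [hg, map_one]
    · exact (congrArg SemidirectProduct.rightHom hg).trans (map_one _)

/-- `C_G(V)/N` is a complemented factor of `G` that is `G`-isomorphic to `V`. For abelian `V` these
`N` are the members of `crownNormals a` (`mem_crownNormals_iff`), described inside `G` instead of
through an isomorphism `G/N ≅ V ⋊ G/C_G(V)`. -/
structure IsCentralizerFactor {V : Type*} [Group V] (a : G →* MulAut V) (N : Subgroup G) :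
    Prop where
  normal : N.Normal
  le_ker : N ≤ a.ker
  represents : RepresentsFactor G a a.ker N
  complemented : IsComplementedFactor G a.ker N

section Crown

theorem eq_of_le_of_index_le {H K : Subgroup G} [H.FiniteIndex] (hle : H ≤ K)
    (hindex : H.index ≤ K.index) : H = K :=
  hle.eq_of_not_lt fun hlt => (Subgroup.index_strictAnti hlt).not_ge hindex

section

variable {V : Type*} [Group V] {a : G →* MulAut V} {N P : Subgroup G}

theorem RepresentsFactor.eq_ker_of_index_eq [Finite G] [N.Normal] [P.Normal]
    (hr : RepresentsFactor G a a.ker N) (hirr : IsIrreducibleGGroup G a) (hN : N ≤ a.ker)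
    (hNP : N ≤ P) (hindex : P.index = a.ker.index) : P = a.ker := by
  obtain ⟨-, -, -, hmin⟩ := hr.isChiefFactorPair hN hirr
  rcases hmin (P ⊓ a.ker) inferInstance (le_inf hNP hN) inf_le_right with h | h
  · exact eq_of_le_of_index_le (hr.le_ker_of_inf_le h.le) hindex.le
  · exact (eq_of_le_of_index_le (inf_eq_right.1 h) hindex.ge).symm

theorem IsCentralizerFactor.comap_socle_eq (hN : IsCentralizerFactor a N) [N.Normal]
    (hirr : IsIrreducibleGGroup G a) :
    (socle (G ⧸ N)).comap (QuotientGroup.mk' N) = a.ker :=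
  le_antisymm (hN.represents.comap_socle_le le_rfl hN.le_ker)
    (hN.represents.isChiefFactorPair hN.le_ker hirr).le_comap_socle

end

variable {V : Type*} [CommGroup V] {a : G →* MulAut V} {X Y N : Subgroup G}

theorem RepresentsFactor.le_ker [X.Normal] (hr : RepresentsFactor G a X Y) : X ≤ a.ker := by
  refine hr.le_ker_iff.2 (Subgroup.commutator_le.2 fun x hx y hy => ?_)
  obtain ⟨f, -, hker, -⟩ := hr
  refine (hker ⁅(⟨x, hx⟩ : X), ⟨y, hy⟩⁆).1 ?_
  rw [map_commutatorElement, commutatorElement_eq_one_iff_mul_comm, mul_comm]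

theorem representsFactor_comap_socle [N.Normal] (h : GIso G (socAct G (QuotientGroup.mk' N)) a) :
    RepresentsFactor G a ((socle (G ⧸ N)).comap (QuotientGroup.mk' N)) N := by
  obtain ⟨φ, hφ⟩ := h
  let f := (QuotientGroup.mk' N).subgroupComap (socle (G ⧸ N))
  have hf : Function.Surjective f :=
    MonoidHom.subgroupComap_surjective_of_surjective _ _ (QuotientGroup.mk'_surjective N)
  refine ⟨φ.toMonoidHom.comp f, φ.surjective.comp hf, fun x => ?_, fun g x y hy => ?_⟩
  · rw [← QuotientGroup.eq_one_iff]
    exact (map_eq_one_iff φ φ.injective).trans Subtype.ext_iff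
  · refine (congrArg φ (Subtype.ext ?_)).trans (hφ g (f x))
    exact (congrArg (QuotientGroup.mk' N) hy).trans (by rw [map_mul, map_mul, map_inv]; rfl)

theorem IsCentralizerFactor.of_mem_crownNormals [Finite G] (hirr : IsIrreducibleGGroup G a)
    (hN : N ∈ crownNormals a) : IsCentralizerFactor a N := by
  obtain ⟨hNnormal, hiso, -, hequiv⟩ := hN
  obtain ⟨ψ⟩ := hiso mul_comm
  have hgiso := gequiv_iff_giso.1 hequiv
  let θ := ψ.toMonoidHom.comp (QuotientGroup.mk' N)
  have hθ : Function.Surjective θ := ψ.surjective.comp (QuotientGroup.mk'_surjective N)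
  have hθker : θ.ker = N :=
    (MonoidHom.ker_mulEquiv_comp _ ψ).trans (QuotientGroup.ker_mk' N)
  have hVpos : 0 < Nat.card V := by
    obtain ⟨φ, -⟩ := hgiso
    exact Nat.card_congr φ.toEquiv ▸ Nat.card_pos
  set M := (socle (G ⧸ N)).comap (QuotientGroup.mk' N)
  have hrM : RepresentsFactor G a M N := representsFactor_comap_socle hgiso
  have hNM : N ≤ M := (QuotientGroup.ker_mk' N).ge.trans (MonoidHom.ker_le_comap _ _)
  have hM : M = a.ker := by
    refine eq_of_le_of_index_le hrM.le_ker (Nat.le_of_mul_le_mul_left (le_of_eq ?_) hVpos)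
    calc Nat.card V * M.index = N.index := by
          rw [← hrM.relIndex_eq, Subgroup.relIndex_mul_index hNM]
      _ = Nat.card V * a.ker.index := by
        rw [Subgroup.index, Nat.card_congr ψ.toEquiv, SemidirectProduct.card, Subgroup.index]
  rw [hM] at hrM hNM
  have hP : (SemidirectProduct.rightHom.comp θ).ker = a.ker := by
    refine hrM.eq_ker_of_index_eq hirr hNM (hθker.ge.trans fun g (hg : _ = _) =>
      (congrArg SemidirectProduct.rightHom hg).trans (map_one _)) ?_
    have hsurj : Function.Surjective (SemidirectProduct.rightHom.comp θ) :=
      SemidirectProduct.rightHom_surjective.comp hθ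
    rw [Subgroup.index_ker, MonoidHom.range_eq_top.2 hsurj, Subgroup.card_top, Subgroup.index]
  exact ⟨hNnormal, hNM, hrM, hP ▸ hθker ▸ isComplementedFactor_of_surjective hθ⟩

theorem exists_section_of_isComplementedFactor [X.Normal] [Y.Normal] (hYX : Y ≤ X)
    (hc : IsComplementedFactor G X Y) :
    ∃ s : G ⧸ X →* G ⧸ Y, ∀ x, QuotientGroup.map Y X (MonoidHom.id G) hYX (s x) = x := by
  obtain ⟨K, hsup, hinf⟩ := hc
  let p : K →* G ⧸ X := (QuotientGroup.mk' X).comp K.subtype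
  have hp : Function.Surjective p := fun x => by
    obtain ⟨g, rfl⟩ := QuotientGroup.mk'_surjective X x
    obtain ⟨k, hk, x, hx, rfl⟩ := Subgroup.mem_sup_of_normal_right.1 (hsup ▸ Subgroup.mem_top g)
    exact ⟨⟨k, hk⟩, ((QuotientGroup.mk_mul_of_mem k hx).symm)⟩
  have hker : p.ker ≤ ((QuotientGroup.mk' Y).comp K.subtype).ker := fun k hk =>
    (QuotientGroup.eq_one_iff _).2 (hinf.le ⟨k.2, (QuotientGroup.eq_one_iff _).1 hk⟩)
  refine ⟨p.liftOfSurjective hp ⟨_, hker⟩, fun x => ?_⟩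
  obtain ⟨k, rfl⟩ := hp x
  rw [MonoidHom.liftOfRightInverse_comp_apply]
  rfl

theorem IsCentralizerFactor.mem_crownNormals (hirr : IsIrreducibleGGroup G a)
    (hN : IsCentralizerFactor a N) : N ∈ crownNormals a := by
  have := hN.normal
  obtain ⟨s, hs⟩ := exists_section_of_isComplementedFactor hN.le_ker hN.complemented
  obtain ⟨j, hj, hrange, hconj⟩ := representsFactor_iff_exists_embedding.1 hN.represents
  let q : G ⧸ N →* G ⧸ a.ker := QuotientGroup.map N a.ker (MonoidHom.id G) hN.le_ker
  have hrangeker : j.range = q.ker :=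
    hrange.trans (QuotientGroup.ker_map N a.ker (MonoidHom.id G) hN.le_ker).symm
  let E : GroupExtension V (G ⧸ N) (G ⧸ a.ker) :=
    { inl := j
      rightHom := q
      inl_injective := hj
      range_inl_eq_ker_rightHom := hrangeker
      rightHom_surjective := fun x => ⟨s x, hs x⟩ }
  let σ : E.Splitting := { s with rightInverse_rightHom := hs }
  have hE (g : G) : E.conjAct g = a g := MulEquiv.ext fun v =>
    hj (E.inl_conjAct_comm.trans (hconj g v).symm)
  have hσ : σ.conjAct = QuotientGroup.kerLift a := MonoidHom.ext fun h => by
    obtain ⟨g, hg⟩ := QuotientGroup.mk'_surjective N (s h)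
    calc σ.conjAct h = a g := (congrArg E.conjAct hg.symm).trans (hE g)
      _ = QuotientGroup.kerLift a h := by rw [← hs h, ← hg]; rfl
  have hsocle : socle (G ⧸ N) = j.range := by
    rw [hrange, ← hN.comap_socle_eq hirr,
      Subgroup.map_comap_eq_self_of_surjective (QuotientGroup.mk'_surjective N)]
  let e : V ≃* socle (G ⧸ N) :=
    (MonoidHom.ofInjective hj).trans (MulEquiv.subgroupCongr hsocle.symm)
  have he (g : G) (v : V) : e (a g v) = socAct G (QuotientGroup.mk' N) g (e v) :=
    Subtype.ext (hconj g v)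
  refine ⟨‹_›, fun _ => ⟨hσ ▸ σ.semidirectProductMulEquiv.symm⟩, fun h => absurd mul_comm h,
    gequiv_iff_giso.2 ⟨e.symm, fun g x => ?_⟩⟩
  rw [MulEquiv.symm_apply_eq, he, MulEquiv.apply_symm_apply]

theorem mem_crownNormals_iff [Finite G] (hirr : IsIrreducibleGGroup G a) :
    N ∈ crownNormals a ↔ IsCentralizerFactor a N :=
  ⟨.of_mem_crownNormals hirr, fun hN => hN.mem_crownNormals hirr⟩

end Crown

section Delta

variable {V : Type*} [CommGroup V] {a : G →* MulAut V} {X Y N T : Subgroup G}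

theorem RepresentsFactor.exists_isCentralizerFactor [X.Normal] [Y.Normal]
    (hr : RepresentsFactor G a X Y) (hc : IsComplementedFactor G X Y) :
    ∃ N, IsCentralizerFactor a N ∧ N ⊓ X = Y := by
  obtain ⟨K, hsup, hinf⟩ := hc
  have hXC : X ≤ a.ker := hr.le_ker
  have hNX : K ⊓ a.ker ⊓ X = Y := by rw [inf_assoc, inf_eq_right.2 hXC, hinf]
  have hYN : Y ≤ K ⊓ a.ker := hNX ▸ inf_le_left
  have hnormal : (K ⊓ a.ker).Normal := by
    have hcomm : ⁅X, a.ker⁆ ≤ Y := Subgroup.commutator_comm X a.ker ▸ hr.le_ker_iff.1 le_rfl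
    refine Subgroup.normalizer_eq_top_iff.1 (eq_top_iff.2 (hsup ▸ sup_le ?_ ?_)) <;>
      rw [Subgroup.le_normalizer_iff]
    · exact fun k hk n hn => ⟨K.mul_mem (K.mul_mem hk hn.1) (K.inv_mem hk),
        Subgroup.Normal.conj_mem inferInstance n hn.2 k⟩
    · intro x hx n hn
      rw [← inv_mul_cancel_right (x * n * x⁻¹) n]
      exact mul_mem (hYN (hcomm (Subgroup.commutator_mem_commutator hx hn.2))) hn
  have hXN : X ⊔ K ⊓ a.ker = a.ker := by
    refine le_antisymm (sup_le hXC inf_le_right) fun c hc => ?_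
    obtain ⟨x, hx, k, hk, rfl⟩ := Subgroup.mem_sup_of_normal_left.1
      ((sup_comm K X ▸ hsup).ge (Subgroup.mem_top c))
    exact mul_mem (Subgroup.mem_sup_left hx)
      (Subgroup.mem_sup_right ⟨hk, (Subgroup.mul_mem_cancel_left _ (hXC hx)).1 hc⟩)
  refine ⟨K ⊓ a.ker, ⟨hnormal, inf_le_right, ?_, K, ?_, rfl⟩, hNX⟩
  · have : RepresentsFactor G a (X ⊔ K ⊓ a.ker) (K ⊓ a.ker) :=
      representsFactor_sup_iff.2 (by rwa [inf_comm, hNX])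
    rwa [hXN] at this
  · exact eq_top_iff.2 (hsup ▸ sup_le_sup_left hXC K)

theorem exists_isChiefFactorPair_le [Finite G] {R : Subgroup G} [R.Normal] [T.Normal] (h : R < T) :
    ∃ M ≤ T, IsChiefFactorPair G M R := by
  obtain ⟨M, hMT, hM⟩ :=
    exists_minimal_le_of_wellFoundedLT (fun M : Subgroup G => M.Normal ∧ R < M) T ⟨‹_›, h⟩
  exact ⟨M, hMT, hM.prop.1, ‹_›, hM.prop.2, fun P hP hRP hPM =>
    hRP.eq_or_lt.imp Eq.symm fun h => hPM.antisymm (hM.le_of_le ⟨hP, h⟩ hPM)⟩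

theorem crownRadical_le (hN : N ∈ crownNormals a) : crownRadical a ≤ N := sInf_le hN

theorem le_crownSocle [Finite G] (hirr : IsIrreducibleGGroup G a) [T.Normal]
    (hRT : crownRadical a ≤ T) (hT : T ≤ a.ker) : T ≤ crownSocle a := by
  revert ‹T.Normal›
  induction T using WellFoundedLT.induction with | ind T ih
  intro
  rcases hRT.eq_or_lt with rfl | hlt
  · exact (QuotientGroup.ker_mk' _).ge.trans (MonoidHom.ker_le_comap _ _)
  obtain ⟨M, hMT, hM⟩ := exists_isChiefFactorPair_le hlt
  obtain ⟨N, hN, hMN⟩ : ∃ N ∈ crownNormals a, ¬ M ≤ N := by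
    by_contra! h
    exact hM.2.2.1.not_ge (le_sInf h)
  have hNC := (mem_crownNormals_iff hirr).1 hN
  have := hNC.normal
  have := hM.1
  have hMNC : M ⊔ N = a.ker :=
    ((hNC.represents.isChiefFactorPair hNC.le_ker hirr).2.2.2 (M ⊔ N) inferInstance le_sup_right
      (sup_le (hMT.trans hT) hNC.le_ker)).resolve_left fun h => hMN (sup_eq_right.1 h)
  have hNT : N ⊓ T ≤ crownSocle a :=
    ih (N ⊓ T) (inf_le_right.lt_of_ne fun h => hMN (hMT.trans (inf_eq_right.1 h)))
      (le_inf (crownRadical_le hN) hRT) (inf_le_right.trans hT)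
  intro t ht
  obtain ⟨m, hm, n, hn, rfl⟩ := Subgroup.mem_sup_of_normal_left.1 (hMNC.ge (hT ht))
  exact mul_mem (hM.le_comap_socle hm)
    (hNT ⟨hn, (Subgroup.mul_mem_cancel_left T (hMT hm)).1 ht⟩)

theorem crownSocle_eq_ker [Finite G] (hirr : IsIrreducibleGGroup G a) (hN : N ∈ crownNormals a) :
    crownSocle a = a.ker := by
  have hNC := (mem_crownNormals_iff hirr).1 hN
  have hR := (crownRadical_le hN).trans hNC.le_ker
  exact le_antisymm (hNC.represents.comap_socle_le (crownRadical_le hN) hR)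
    (le_crownSocle hirr hR le_rfl)

theorem crownRadical_le_ker [Finite G] (hirr : IsIrreducibleGGroup G a)
    (hN : N ∈ crownNormals a) : crownRadical a ≤ a.ker :=
  (crownRadical_le hN).trans ((mem_crownNormals_iff hirr).1 hN).le_ker

namespace ChiefSeries

instance normal_ser (S : ChiefSeries G) (i : Fin (S.len + 1)) : (S.ser i).Normal := by
  cases i using Fin.cases with
  | zero => exact S.bot_eq ▸ inferInstance
  | succ i => exact (S.chief i).1

theorem monotone_ser (S : ChiefSeries G) : Monotone S.ser :=
  Fin.monotone_iff_le_succ.2 fun i => (S.chief i).2.2.1.le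

end ChiefSeries

theorem prod_mul_zero_le_last {M : Type*} [CommMonoid M] [Preorder M] [MulLeftMono M] {n : ℕ}
    {f : Fin (n + 1) → M} {g : Fin n → M} (h : ∀ i, g i * f i.castSucc ≤ f i.succ) :
    (∏ i, g i) * f 0 ≤ f (Fin.last n) := by
  induction n with
  | zero => simp
  | succ n ih =>
    rw [Fin.prod_univ_castSucc, mul_comm (∏ i : Fin n, _), mul_assoc]
    exact (mul_le_mul_right (ih (f := f ∘ Fin.castSucc) fun i => h i.castSucc) _).trans
      (h (Fin.last n))

theorem RepresentsFactor.card_mul_relIndex_crownRadical [Finite G]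
    (hirr : IsIrreducibleGGroup G a) [X.Normal] [Y.Normal] (hr : RepresentsFactor G a X Y)
    (hc : IsComplementedFactor G X Y) :
    Nat.card V * (crownRadical a).relIndex Y = (crownRadical a).relIndex X := by
  obtain ⟨N, hN, hNX⟩ := hr.exists_isCentralizerFactor hc
  have hYX : Y ≤ X := hNX ▸ inf_le_right
  have hRXY : crownRadical a ⊓ X ≤ Y :=
    (inf_le_inf_right X (crownRadical_le ((mem_crownNormals_iff hirr).2 hN))).trans_eq hNX
  have hRX : crownRadical a ⊓ X = crownRadical a ⊓ Y :=
    le_antisymm (le_inf inf_le_left hRXY) (inf_le_inf_left _ hYX)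
  rw [← hr.relIndex_eq, ← Subgroup.inf_relIndex_right _ Y, ← hRX, mul_comm,
    ← Subgroup.inf_relIndex_right (crownRadical a) X, Subgroup.relIndex_mul_relIndex _ _ _ hRXY hYX]

theorem card_pow_deltaIso_le [Finite G] (hirr : IsIrreducibleGGroup G a) (S : ChiefSeries G) :
    Nat.card V ^ deltaIso a S ≤ (crownRadical a).relIndex a.ker := by
  classical
  let f (j : Fin (S.len + 1)) : ℕ := (crownRadical a).relIndex (S.ser j ⊓ a.ker)
  let P (i : Fin S.len) : Prop := IsComplementedFactor G (S.ser i.succ) (S.ser i.castSucc) ∧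
    RepresentsFactor G a (S.ser i.succ) (S.ser i.castSucc)
  have hstep (i : Fin S.len) : (if P i then Nat.card V else 1) * f i.castSucc ≤ f i.succ := by
    have hle := S.monotone_ser i.castSucc_lt_succ.le
    split_ifs with h
    · have hC := h.2.le_ker
      simp only [f, inf_eq_left.2 hC, inf_eq_left.2 (hle.trans hC)]
      exact (h.2.card_mul_relIndex_crownRadical hirr h.1).le
    · rw [one_mul]
      exact Subgroup.relIndex_le_of_le_right (inf_le_inf_right _ hle)
        Subgroup.index_ne_zero_of_finite
  calc Nat.card V ^ deltaIso a S
    _ = ∏ i, if P i then Nat.card V else 1 := by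
      rw [Finset.prod_ite, Finset.prod_const, Finset.prod_const_one, mul_one, deltaIso,
        Nat.subtype_card {i | P i} (by simp [P])]
    _ = (∏ i, if P i then Nat.card V else 1) * f 0 := by simp [f, S.bot_eq]
    _ ≤ f (Fin.last S.len) := prod_mul_zero_le_last hstep
    _ = (crownRadical a).relIndex a.ker := by simp only [f, S.top_eq, top_inf_eq]

theorem IsCentralizerFactor.isComplementedFactor_and_representsFactor
    (hN : IsCentralizerFactor a N) (hirr : IsIrreducibleGGroup G a) (hXY : IsChiefFactorPair G X Y)
    (hY : Y ⊓ a.ker ≤ N) (hX : ¬ X ⊓ a.ker ≤ N) :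
    IsComplementedFactor G X Y ∧ RepresentsFactor G a X Y := by
  obtain ⟨hNnormal, hNC, hr, K, hsup, hinf⟩ := hN
  obtain ⟨hXnormal, hYnormal, hlt, hmin⟩ := hXY
  have hYC : Y ≤ a.ker := hr.le_ker_of_inf_le hY
  rw [inf_eq_left.2 hYC] at hY
  have hXC : X ≤ a.ker := inf_eq_left.1 <|
    (hmin (X ⊓ a.ker) inferInstance (le_inf hlt.le hYC) inf_le_left).resolve_left
      fun h => hX (h.trans_le hY)
  rw [inf_eq_left.2 hXC] at hX
  have hXN : X ⊓ N = Y :=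
    (hmin (X ⊓ N) inferInstance (le_inf hlt.le hY) inf_le_left).resolve_right
      fun h => hX (inf_eq_left.1 h)
  have hXNC : X ⊔ N = a.ker :=
    ((hr.isChiefFactorPair hNC hirr).2.2.2 (X ⊔ N) inferInstance le_sup_right
      (sup_le hXC hNC)).resolve_left fun h => hX (sup_eq_right.1 h)
  refine ⟨⟨K, ?_, ?_⟩, ?_⟩
  · rw [eq_top_iff, ← hsup, ← hXNC]
    exact sup_le le_sup_left (sup_le le_sup_right ((hinf ▸ inf_le_left : N ≤ K).trans le_sup_left))
  · rw [← hXN, ← hinf, inf_comm X, inf_assoc, inf_eq_right.2 hXC]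
  · rw [← hXN]
    exact representsFactor_sup_iff.1 (hXNC ▸ hr)

theorem deltaIso_pos [Finite G] (hirr : IsIrreducibleGGroup G a) (hN : N ∈ crownNormals a)
    (S : ChiefSeries G) : 0 < deltaIso a S := by
  have hNC := (mem_crownNormals_iff hirr).1 hN
  have := hNC.normal
  obtain ⟨i, hi, hi'⟩ : ∃ i : Fin S.len,
      S.ser i.castSucc ⊓ a.ker ≤ N ∧ ¬ S.ser i.succ ⊓ a.ker ≤ N := by
    by_contra! h
    have hall (j) : S.ser j ⊓ a.ker ≤ N := by
      induction j using Fin.induction with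
      | zero => rw [S.bot_eq, bot_inf_eq]; exact bot_le
      | succ j ih => exact h j ih
    have hker : a.ker ≤ N := by simpa only [S.top_eq, top_inf_eq] using hall (Fin.last S.len)
    exact (hNC.represents.isChiefFactorPair hNC.le_ker hirr).2.2.1.not_ge hker
  have : Nonempty {i : Fin S.len // IsComplementedFactor G (S.ser i.succ) (S.ser i.castSucc) ∧
      RepresentsFactor G a (S.ser i.succ) (S.ser i.castSucc)} :=
    ⟨i, hNC.isComplementedFactor_and_representsFactor hirr (S.chief i) hi hi'⟩
  exact Nat.card_pos

end Delta

section Endomorphisms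

variable {V : Type*} [CommGroup V]

/-- The ring of endomorphisms of `V`, written additively, generated by the action of `G`. The
`G`-endomorphisms of `V` are the endomorphisms of `Additive V` as a module over this ring, which
makes Schur's lemma available. -/
def actionRing (a : G →* MulAut V) : Subring (AddMonoid.End (Additive V)) :=
  Subring.closure (Set.range fun g => MonoidHom.toAdditive (a g).toMonoidHom)

variable {a : G →* MulAut V}

theorem IsIrreducibleGGroup.isSimpleModule (hirr : IsIrreducibleGGroup G a) :
    IsSimpleModule (actionRing a) (Additive V) := by
  have : Nontrivial V := hirr.1
  refine { eq_bot_or_eq_top := fun W => ?_ }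
  have hW (g : G) (v : V) (hv : v ∈ W.toAddSubgroup.toSubgroup') :
      a g v ∈ W.toAddSubgroup.toSubgroup' :=
    W.smul_mem ⟨_, Subring.subset_closure ⟨g, rfl⟩⟩ hv
  exact (hirr.2 _ inferInstance hW).imp (fun h => eq_bot_iff.2 h.le) fun h => eq_top_iff.2 h.ge

theorem endCard_eq_card_moduleEnd :
    endCard G a = Nat.card (Module.End (actionRing a) (Additive V)) := by
  refine Nat.card_congr
    { toFun := fun f =>
        { toFun := MonoidHom.toAdditive f.1
          map_add' := map_add _
          map_smul' := fun r v => ?_ }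
      invFun := fun f => ⟨MonoidHom.toAdditive.symm f.toAddMonoidHom,
        fun g v => f.map_smul ⟨_, Subring.subset_closure ⟨g, rfl⟩⟩ (Additive.ofMul v)⟩
      left_inv := fun f => rfl
      right_inv := fun f => rfl }
  have hcomm : actionRing a ≤
      Subring.centralizer (R := AddMonoid.End (Additive V)) {MonoidHom.toAdditive f.1} := by
    rw [actionRing, Subring.closure_le]
    rintro _ ⟨g, rfl⟩
    refine Subring.mem_centralizer_iff.2 ?_
    rintro _ rfl
    exact AddMonoidHom.ext (f.2 g)
  exact DFunLike.congr_fun (Subring.mem_centralizer_iff.1 (hcomm r.2) _ rfl) v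

variable [Finite V]

theorem IsIrreducibleGGroup.one_lt_endCard (hirr : IsIrreducibleGGroup G a) :
    1 < endCard G a := by
  have : Nontrivial V := hirr.1
  have : Finite (Module.End (actionRing a) (Additive V)) := DFunLike.finite _
  rw [endCard_eq_card_moduleEnd]
  exact Finite.one_lt_card

theorem IsIrreducibleGGroup.endCard_pow_dimEnd (hirr : IsIrreducibleGGroup G a) :
    endCard G a ^ dimEnd G a = Nat.card V := by
  classical
  have := hirr.isSimpleModule
  let _ := Fintype.ofFinite (Additive V)
  let _ := @Fintype.ofFinite (Module.End (actionRing a) (Additive V)) (DFunLike.finite _)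
  refine Nat.sInf_mem (s := {n | endCard G a ^ n = Nat.card V})
    ⟨Module.finrank (Module.End (actionRing a) (Additive V)) (Additive V), ?_⟩
  rw [Set.mem_ofPred_eq, endCard_eq_card_moduleEnd, Nat.card_eq_fintype_card,
    ← Module.card_eq_pow_finrank, ← Nat.card_eq_fintype_card, Nat.card_congr Additive.toMul]

end Endomorphisms

section Derivations

variable {V : Type*} [CommGroup V] {b : G →* MulAut V} {ζ : G → V}

theorem IsIrreducibleGGroup.eq_one_of_fixed (hirr : IsIrreducibleGGroup G b) {N : Subgroup G}
    [N.Normal] (hN : ¬ N ≤ b.ker) {v : V} (hv : ∀ n ∈ N, b n v = v) : v = 1 := by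
  let W : Subgroup V := ⨅ n : N, (b n).toMonoidHom.eqLocus (.id V)
  have mem_W (w : V) : w ∈ W ↔ ∀ n ∈ N, b n w = w := by
    simp only [W, Subgroup.mem_iInf, Subtype.forall]
    rfl
  have hW (g : G) (w : V) (hw : w ∈ W) : b g w ∈ W := by
    rw [mem_W] at hw ⊢
    intro n hn
    have := hw _ (Subgroup.Normal.conj_mem' ‹_› n hn g)
    rw [map_mul, map_mul, map_inv, MulAut.mul_apply, MulAut.mul_apply, MulAut.inv_apply,
      MulEquiv.symm_apply_eq] at this
    exact this
  rcases hirr.2 W inferInstance hW with h | h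
  · exact (Subgroup.mem_bot (G := V)).1 (h ▸ (mem_W v).2 hv)
  · exact absurd (fun n hn => MulEquiv.ext fun w => (mem_W w).1 (h ▸ Subgroup.mem_top w) n hn) hN

theorem card_iderSet (hirr : IsIrreducibleGGroup G b) (hb : b ≠ 1) :
    Nat.card (IderSet G b) = Nat.card V := by
  have hinj : Function.Injective fun (v : V) (g : G) => b g v * v⁻¹ := by
    intro v w hvw
    refine mul_inv_eq_one.1 (hirr.eq_one_of_fixed (N := ⊤) (fun h => hb ?_) fun g _ => ?_)
    · exact MonoidHom.ext fun g => h (Subgroup.mem_top g)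
    · have : b g v * v⁻¹ = b g w * w⁻¹ := congrFun hvw g
      rw [← div_eq_mul_inv, ← div_eq_mul_inv, div_eq_div_iff_mul_eq_mul] at this
      rw [map_mul, map_inv, ← div_eq_mul_inv, ← div_eq_mul_inv, div_eq_div_iff_mul_eq_mul, this,
        mul_comm]
  have hrange : IderSet G b = Set.range fun (v : V) (g : G) => b g v * v⁻¹ := by
    ext ζ
    exact exists_congr fun v => ⟨fun h => (funext h).symm, fun h g => (congrFun h g).symm⟩
  rw [hrange, Nat.card_congr (Equiv.ofInjective _ hinj)]

theorem apply_mul_comm_of_mem_derSet (hζ : ζ ∈ DerSet G b) (g h k : G) :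
    b (h * k) (ζ g) = b (k * h) (ζ g) := by
  have := hζ (g * k) h
  rw [mul_assoc, hζ g (k * h), hζ g k, hζ k h, map_mul (b h), ← mul_assoc, mul_left_inj,
    mul_left_inj] at this
  rw [this, map_mul, MulAut.mul_apply]

theorem eq_one_of_mem_derSet (hirr : IsIrreducibleGGroup G b) (hb : ¬ commutator G ≤ b.ker)
    (hζ : ζ ∈ DerSet G b) : ζ = 1 := by
  funext g
  refine hirr.eq_one_of_fixed hb fun n hn => ?_
  suffices h : commutator G ≤ (MulAction.stabilizer (MulAut V) (ζ g)).comap b from h hn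
  rw [commutator_def, Subgroup.commutator_le]
  intro h _ k _
  calc b ⁅h, k⁆ (ζ g) = b (h * k) (b (h⁻¹ * k⁻¹) (ζ g)) := by
        rw [commutatorElement_def, mul_assoc (h * k), map_mul, MulAut.mul_apply]
    _ = ζ g := by
        rw [apply_mul_comm_of_mem_derSet hζ, ← mul_inv_rev, ← MulAut.mul_apply, ← map_mul,
          mul_inv_cancel, map_one, MulAut.one_apply]

theorem eq_one_of_mem_derSet_of_apply_eq_one (hcomm : ∀ g h : G, g * h = h * g)
    (hirr : IsIrreducibleGGroup G b) (hζ : ζ ∈ DerSet G b) {g : G} (hg : b g ≠ 1) (hζg : ζ g = 1) :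
    ζ = 1 := by
  have : (Subgroup.zpowers g).Normal :=
    ⟨fun n hn h => by rwa [hcomm h n, mul_inv_cancel_right]⟩
  funext h
  refine hirr.eq_one_of_fixed (N := .zpowers g) (fun hle => hg (hle (Subgroup.mem_zpowers g))) ?_
  suffices hle : Subgroup.zpowers g ≤ (MulAction.stabilizer (MulAut V) (ζ h)).comap b from
    fun n hn => hle hn
  rw [Subgroup.zpowers_le]
  calc b g (ζ h) = ζ (h * g) := by rw [hζ, hζg, mul_one]
    _ = ζ h := by rw [hcomm, hζ, hζg, map_one, one_mul]

theorem div_mem_derSet {ξ : G → V} (hζ : ζ ∈ DerSet G b) (hξ : ξ ∈ DerSet G b) :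
    ζ / ξ ∈ DerSet G b := fun g h => by
  simp only [Pi.div_apply, hζ g h, hξ g h, map_div, mul_div_mul_comm]

theorem card_derSet_le [Finite V] (hirr : IsIrreducibleGGroup G b) (hinj : Function.Injective b)
    (hb : b ≠ 1) : Nat.card (DerSet G b) ≤ Nat.card V := by
  obtain ⟨g, hg⟩ := DFunLike.ne_iff.1 hb
  refine Nat.card_le_card_of_injective (fun ζ : DerSet G b => ζ.1 g) fun ζ ξ h => ?_
  refine Subtype.ext (div_eq_one.1 ?_)
  have hdiv := div_mem_derSet ζ.2 ξ.2
  by_cases hcomm : commutator G ≤ b.ker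
  · rw [(MonoidHom.ker_eq_bot_iff b).2 hinj, commutator_def, Subgroup.commutator_le] at hcomm
    exact eq_one_of_mem_derSet_of_apply_eq_one
      (fun g h => commutatorElement_eq_one_iff_mul_comm.1 (hcomm g trivial h trivial))
      hirr hdiv hg (div_eq_one.2 h)
  · exact eq_one_of_mem_derSet hirr hcomm hdiv

/- `DerSet` uses the cocycle rule of a right action whereas `b` is a left action. For abelian `G`
this makes no difference, but for non-abelian `G` every member of `DerSet` is trivial, no exponent
fits the definition of `h1Dim`, and the value is `0` only through `sInf ∅ = 0`. -/
theorem h1Dim_eq_zero [Finite V] (hirr : IsIrreducibleGGroup G b) (hinj : Function.Injective b)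
    (hb : b ≠ 1) : h1Dim G b = 0 := by
  rw [h1Dim, Nat.sInf_eq_zero]
  rcases Set.eq_empty_or_nonempty
    {m | endCard G b ^ m * Nat.card (IderSet G b) = Nat.card (DerSet G b)} with h | ⟨m, hm⟩
  · exact .inr h
  · have hpow : 0 < endCard G b ^ m := Nat.pow_pos (Nat.zero_lt_of_lt hirr.one_lt_endCard)
    have hle : Nat.card (IderSet G b) ≤ Nat.card (DerSet G b) :=
      (Nat.le_mul_of_pos_left _ hpow).trans_eq hm
    have hge : Nat.card (DerSet G b) ≤ Nat.card (IderSet G b) :=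
      (card_derSet_le hirr hinj hb).trans_eq (card_iderSet hirr hb).symm
    left
    rw [Set.mem_ofPred_eq, pow_zero, one_mul]
    exact hle.antisymm hge

end Derivations

section FixedPoints

variable {V : Type*} [Group V]

theorem exists_moved_by_both {x y : MulAut V} (hx : x ≠ 1) (hy : y ≠ 1) :
    ∃ v, x v ≠ v ∧ y v ≠ v := by
  obtain ⟨u, hu⟩ := DFunLike.ne_iff.1 hx
  obtain ⟨w, hw⟩ := DFunLike.ne_iff.1 hy
  by_cases hyu : y u = u
  · by_cases hxw : x w = w
    · refine ⟨u * w, ?_, ?_⟩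
      · rw [map_mul, hxw]
        exact fun h => hu (mul_right_cancel h)
      · rw [map_mul, hyu]
        exact fun h => hw (mul_left_cancel h)
    · exact ⟨w, hxw, hw⟩
  · exact ⟨u, hu, hyu⟩

variable [Finite V] {b : G →* MulAut V}

theorem ncard_ne_one : {v : V | v ≠ 1}.ncard = Nat.card V - 1 := by
  rw [← Set.compl_singleton_eq, Set.ncard_compl, Set.ncard_singleton]

theorem card_le_factorial_of_injective (hb : Function.Injective b) :
    Nat.card G ≤ (Nat.card V - 1).factorial := by
  classical
  rw [← ncard_ne_one, ← Nat.card_coe_set_eq, ← Nat.card_perm]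
  refine Nat.card_le_card_of_injective (fun g =>
    ((b g).toEquiv.subtypeEquiv fun v => by simp : Equiv.Perm {v : V // v ≠ 1}))
    fun g h hgh => hb (MulEquiv.ext fun v => ?_)
  rcases eq_or_ne v 1 with rfl | hv
  · rw [map_one, map_one]
  · exact congrArg Subtype.val (DFunLike.congr_fun hgh ⟨v, hv⟩)

/-- The stabilizer of `v` under the action `b`. -/
def fixer (b : G →* MulAut V) (v : V) : Subgroup G := (MulAction.stabilizer (MulAut V) v).comap b

theorem index_fixer_le {v : V} (hv : v ≠ 1) : (fixer b v).index ≤ Nat.card V - 1 := by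
  let _ : MulAction G V := MulAction.compHom V b
  have : fixer b v = MulAction.stabilizer G v := rfl
  rw [this, MulAction.index_stabilizer, ← ncard_ne_one]
  refine Set.ncard_le_ncard ?_
  rintro _ ⟨g, rfl⟩
  exact (map_ne_one_iff (b g) (b g).injective).2 hv

theorem card_le_card_fixing_mul [Finite G] [Nontrivial V] (b : G →* MulAut V) :
    Nat.card G ≤ Nat.card {g : G // ∃ v, v ≠ 1 ∧ b g v = v} * (Nat.card V - 1) := by
  obtain ⟨v, hv⟩ := exists_ne (1 : V)
  rw [← (fixer b v).card_mul_index]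
  refine Nat.mul_le_mul ?_ (index_fixer_le hv)
  exact Nat.card_le_card_of_injective (fun g : fixer b v => ⟨g.1, v, hv, g.2⟩) fun g h hgh =>
    Subtype.ext (Subtype.mk.inj hgh)

theorem exists_ne_one_fixing (hcard : Nat.card V ≤ Nat.card G) {v : V} (hv : v ≠ 1) :
    ∃ g : G, g ≠ 1 ∧ b g v = v := by
  by_contra! h
  have hbot : fixer b v = ⊥ :=
    (Subgroup.eq_bot_iff_forall _).2 fun g hg => by_contra fun hne => h g hne hg
  have := index_fixer_le (b := b) hv
  rw [hbot, Subgroup.index_bot] at this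
  have : 0 < Nat.card V := Nat.card_pos
  omega

theorem four_le_card_fixing [Finite G] [Nontrivial V] (hb : Function.Injective b)
    (hcard : Nat.card V ≤ Nat.card G) :
    4 ≤ Nat.card {g : G // ∃ v, v ≠ 1 ∧ b g v = v} := by
  have ne_one {g : G} {v : V} (h : b g v ≠ v) : v ≠ 1 := by
    rintro rfl
    exact h (map_one _)
  have moved {g : G} (hg : g ≠ 1) : b g ≠ 1 := (map_ne_one_iff b hb).2 hg
  obtain ⟨u, hu⟩ := exists_ne (1 : V)
  obtain ⟨x, hx, hxu⟩ := exists_ne_one_fixing (b := b) hcard hu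
  obtain ⟨v, hxv⟩ := DFunLike.ne_iff.1 (moved hx)
  obtain ⟨y, hy, hyv⟩ := exists_ne_one_fixing (b := b) hcard (ne_one hxv)
  obtain ⟨w, hxw, hyw⟩ := exists_moved_by_both (moved hx) (moved hy)
  obtain ⟨z, hz, hzw⟩ := exists_ne_one_fixing (b := b) hcard (ne_one hxw)
  have hxy : x ≠ y := by rintro rfl; exact hxv hyv
  have hxz : x ≠ z := by rintro rfl; exact hxw hzw
  have hyz : y ≠ z := by rintro rfl; exact hyw hzw
  classical
  have hfour : ({1, x, y, z} : Finset G).card = 4 := by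
    simp [hx.symm, hy.symm, hz.symm, hxy, hxz, hyz]
  rw [← hfour, ← Set.ncard_coe_finset]
  refine Set.ncard_le_ncard (t := {g | ∃ v, v ≠ 1 ∧ b g v = v}) ?_
  simp only [Finset.coe_insert, Finset.coe_singleton, Set.insert_subset_iff,
    Set.singleton_subset_iff]
  exact ⟨⟨u, hu, by simp⟩, ⟨u, hu, hxu⟩, ⟨v, ne_one hxv, hyv⟩, w, ne_one hxw, hzw⟩

end FixedPoints

section Estimates

/-- The quantity `δθ` of the definition of `α_U`: `θ` is `0` if `δ = 1`, and `1` otherwise. -/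
def deltaTheta (d : ℕ) : ℝ := d * if d = 1 then 0 else 1

/-- The values of `δ`, `qⁿ = |V|` and `|R_G(V)|` for which the bound on `α_U` may fail when
`|H| < |V|`. -/
def IsExceptional (d Q r : ℕ) : Prop :=
  (d = 2 ∧ Q = 4 ∧ r = 1) ∨ (d = 2 ∧ Q = 3 ∧ r ≤ 2) ∨
    (d = 1 ∧ 4 ≤ Q ∧ Q ≤ 7 ∧ r = 1) ∨ (d = 1 ∧ Q = 3 ∧ r ≤ 3)

theorem deltaTheta_one : deltaTheta 1 = 0 := by simp [deltaTheta]

theorem deltaTheta_of_ne_one {d : ℕ} (hd : d ≠ 1) : deltaTheta d = d := by simp [deltaTheta, hd]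

theorem deltaTheta_nonneg (d : ℕ) : 0 ≤ deltaTheta d := by
  unfold deltaTheta
  positivity

theorem ceil_deltaTheta_div_le (d n : ℕ) : ⌈deltaTheta d / n⌉ ≤ deltaTheta d := by
  have hle : deltaTheta d / n ≤ deltaTheta d := by
    rcases n.eq_zero_or_pos with rfl | hn
    · simpa using deltaTheta_nonneg d
    · exact div_le_self (deltaTheta_nonneg d) (by exact_mod_cast hn)
  rcases eq_or_ne d 1 with rfl | hd
  · simp [deltaTheta_one]
  · rw [deltaTheta_of_ne_one hd] at hle ⊢
    exact_mod_cast Int.ceil_le.2 (by exact_mod_cast hle : (d : ℝ) / n ≤ ((d : ℤ) : ℝ))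

theorem mul_lt_mul_sqrt_of_sq_mul_lt {E D B h r : ℝ} (hD : 0 ≤ D) (hh : 0 < h)
    (hr : 0 ≤ r) (hB : h ≤ B) (hED : E ^ 2 * B < D ^ 2 * r) : E * h < D * √(h * r) := by
  refine lt_of_pow_lt_pow_left₀ 2 (by positivity) ?_
  calc (E * h) ^ 2 = E ^ 2 * h * h := by ring
    _ ≤ E ^ 2 * B * h := by gcongr
    _ < D ^ 2 * r * h := by gcongr
    _ = (D * √(h * r)) ^ 2 := by rw [mul_pow, Real.sq_sqrt (by positivity)]; ring

/- `(s - 1) ^ 2 * (s ^ 2 - 1) / s ^ 4` increases with `s`. -/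
theorem pow_four_lt_of_le {c s k : ℝ} (hc : 1 < c) (hcs : c ≤ s)
    (h : c ^ 4 < k * ((c - 1) ^ 2 * (c ^ 2 - 1))) :
    s ^ 4 < k * ((s - 1) ^ 2 * (s ^ 2 - 1)) := by
  have hc2 : 0 < c ^ 2 - 1 := by nlinarith
  have hpos : 0 < (c - 1) ^ 2 * (c ^ 2 - 1) := mul_pos (pow_pos (sub_pos.2 hc) 2) hc2
  have hlin : s * (c - 1) ≤ c * (s - 1) := by linarith
  have hsq : s ^ 2 * (c ^ 2 - 1) ≤ c ^ 2 * (s ^ 2 - 1) := by nlinarith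
  refine lt_of_mul_lt_mul_left ?_ hpos.le
  calc (c - 1) ^ 2 * (c ^ 2 - 1) * s ^ 4 = (s * (c - 1)) ^ 2 * (s ^ 2 * (c ^ 2 - 1)) := by ring
    _ ≤ (c * (s - 1)) ^ 2 * (c ^ 2 * (s ^ 2 - 1)) := by
        gcongr
        exact mul_nonneg (by linarith) (by linarith)
    _ = c ^ 4 * ((s - 1) ^ 2 * (s ^ 2 - 1)) := by ring
    _ < k * ((c - 1) ^ 2 * (c ^ 2 - 1)) * ((s - 1) ^ 2 * (s ^ 2 - 1)) := by
        gcongr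
        exact mul_pos (pow_pos (by linarith) 2) (by nlinarith)
    _ = (c - 1) ^ 2 * (c ^ 2 - 1) * (k * ((s - 1) ^ 2 * (s ^ 2 - 1))) := by ring

/- `y ^ 3 / (3 * y + 1) ^ 2` increases with `y`. -/
theorem sq_lt_mul_pow_three_of_le {c y k : ℝ} (hc : 0 < c) (hcy : c ≤ y)
    (h : (3 * c + 1) ^ 2 < k * c ^ 3) : (3 * y + 1) ^ 2 < k * y ^ 3 := by
  have hk : 0 < k := pos_of_mul_pos_left ((by positivity : 0 < (3 * c + 1) ^ 2).trans h)
    (by positivity)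
  have hy : 0 < y := hc.trans_le hcy
  have hlin : c * (3 * y + 1) ≤ y * (3 * c + 1) := by linarith
  refine lt_of_mul_lt_mul_left ?_ (sq_nonneg c)
  calc c ^ 2 * (3 * y + 1) ^ 2 = (c * (3 * y + 1)) ^ 2 := by ring
    _ ≤ (y * (3 * c + 1)) ^ 2 := by gcongr
    _ = y ^ 2 * (3 * c + 1) ^ 2 := by ring
    _ < y ^ 2 * (k * c ^ 3) := by gcongr
    _ = k * c ^ 2 * y ^ 2 * c := by ring
    _ ≤ k * c ^ 2 * y ^ 2 * y := by gcongr
    _ = c ^ 2 * (k * y ^ 3) := by ring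

theorem add_mul_lt_pow_sub_one {s t : ℝ} (hs : 1.73 ≤ s) (hst : t ^ 2 = s ^ 2 - 1)
    {d : ℕ} (hd : 3 ≤ d) : (d + 3 / 2) * t < 5 / 3 * (s ^ d - 1) := by
  suffices h : (d + 3 / 2) * (2 * s ^ 2 - 1) < 10 / 3 * (s ^ (d + 1) - s) by
    have hamgm : 2 * s * t ≤ 2 * s ^ 2 - 1 := by linarith [sq_nonneg (s - t)]
    refine lt_of_mul_lt_mul_left ?_ (by linarith : 0 ≤ 2 * s)
    calc 2 * s * ((d + 3 / 2) * t) = (d + 3 / 2) * (2 * s * t) := by ring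
      _ ≤ (d + 3 / 2) * (2 * s ^ 2 - 1) := by gcongr
      _ < 10 / 3 * (s ^ (d + 1) - s) := h
      _ = 2 * s * (5 / 3 * (s ^ d - 1)) := by ring
  induction d, hd using Nat.le_induction with
  | base => push_cast; nlinarith [sq_nonneg (s ^ 2 - 3)]
  | succ d hd ih =>
    have hpow : s ^ 4 ≤ s ^ (d + 1) := pow_le_pow_right₀ (by linarith) (by lia)
    have hfour : 2 * s ^ 2 - 1 ≤ s ^ 4 := by nlinarith [sq_nonneg (s ^ 2 - 1)]
    have hstep : s ^ (d + 1) * 0.73 ≤ s ^ (d + 1) * (s - 1) := by gcongr; linarith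
    have hpos : 0 ≤ s ^ (d + 1) := by positivity
    push_cast
    rw [mul_sub_one] at hstep
    rw [pow_succ s (d + 1)]
    linarith

theorem div_sq_mul_lt {Q r : ℕ} (hQr : 8 ≤ Q ∨ 4 ≤ Q ∧ 2 ≤ r ∨ 3 ≤ Q ∧ 4 ≤ r) (hr : 0 < r) :
    (Q / (Q - 1) : ℝ) ^ 2 * (Q - 1) < (5 / 3 * (√Q - 1)) ^ 2 * r := by
  have hs : √(Q : ℝ) ^ 2 = Q := Real.sq_sqrt Q.cast_nonneg
  have hQ : 0 < (Q - 1 : ℝ) := sub_pos.2 (by exact_mod_cast (by lia : 1 < Q))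
  suffices h : √(Q : ℝ) ^ 4 < 25 / 9 * r * ((√Q - 1) ^ 2 * (√Q ^ 2 - 1)) by
    calc (Q / (Q - 1) : ℝ) ^ 2 * (Q - 1) = √Q ^ 4 / (Q - 1) := by
          rw [pow_mul _ 2 2, hs]; field_simp
      _ < (5 / 3 * (√Q - 1)) ^ 2 * r := by
          rw [div_lt_iff₀ hQ]
          rw [hs] at h
          linarith
  rcases hQr with hQ8 | ⟨hQ4, hr2⟩ | ⟨hQ3, hr4⟩
  · refine pow_four_lt_of_le (c := 2.82) (by norm_num) (Real.le_sqrt_of_sq_le ?_) ?_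
    · linarith [Nat.ofNat_le_cast (α := ℝ).2 hQ8]
    · linarith [Nat.one_le_cast (α := ℝ).2 hr]
  · refine pow_four_lt_of_le (c := 2) (by norm_num) (Real.le_sqrt_of_sq_le ?_) ?_
    · linarith [Nat.ofNat_le_cast (α := ℝ).2 hQ4]
    · linarith [Nat.ofNat_le_cast (α := ℝ).2 hr2]
  · refine pow_four_lt_of_le (c := 1.73) (by norm_num) (Real.le_sqrt_of_sq_le ?_) ?_
    · linarith [Nat.ofNat_le_cast (α := ℝ).2 hQ3]
    · linarith [Nat.ofNat_le_cast (α := ℝ).2 hr4]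

theorem two_add_div_sq_mul_lt {Q r : ℕ} (hQr : 5 ≤ Q ∨ 4 ≤ Q ∧ 2 ≤ r ∨ 3 ≤ Q ∧ 3 ≤ r)
    (hr : 0 < r) : (2 + Q / (Q - 1) : ℝ) ^ 2 * (Q - 1) < (5 / 3 * (Q - 1)) ^ 2 * r := by
  obtain ⟨y, rfl⟩ : ∃ y, Q = y + 1 := ⟨Q - 1, by lia⟩
  have hy : 0 < (y : ℝ) := Nat.cast_pos.2 (by lia)
  push_cast
  rw [add_sub_cancel_right]
  suffices h : (3 * y + 1 : ℝ) ^ 2 < 25 / 9 * r * y ^ 3 by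
    have hlhs : (2 + (y + 1) / y : ℝ) ^ 2 * (y : ℝ) = (3 * y + 1) ^ 2 / (y : ℝ) := by
      field_simp
      ring
    rw [hlhs, div_lt_iff₀ hy]
    linarith
  rcases hQr with hQ5 | ⟨hQ4, hr2⟩ | ⟨hQ3, hr3⟩
  · refine sq_lt_mul_pow_three_of_le four_pos (by exact_mod_cast Nat.le_of_succ_le_succ hQ5) ?_
    linarith [Nat.one_le_cast (α := ℝ).2 hr]
  · refine sq_lt_mul_pow_three_of_le three_pos (by exact_mod_cast Nat.le_of_succ_le_succ hQ4) ?_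
    linarith [Nat.ofNat_le_cast (α := ℝ).2 hr2]
  · refine sq_lt_mul_pow_three_of_le two_pos (by exact_mod_cast Nat.le_of_succ_le_succ hQ3) ?_
    linarith [Nat.ofNat_le_cast (α := ℝ).2 hr3]

theorem add_div_sq_mul_lt {d Q r : ℕ} (hd : 3 ≤ d) (hQ : 3 ≤ Q) (hr : 0 < r) :
    (d + Q / (Q - 1) : ℝ) ^ 2 * (Q - 1) < (5 / 3 * (√Q ^ d - 1)) ^ 2 * r := by
  have hQ' : (3 : ℝ) ≤ Q := by exact_mod_cast hQ
  have hQ1 : (0 : ℝ) < Q - 1 := by linarith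
  have ht : √(Q - 1 : ℝ) ^ 2 = Q - 1 := Real.sq_sqrt hQ1.le
  have hdiv : (Q / (Q - 1) : ℝ) ≤ 3 / 2 := by rw [div_le_iff₀ hQ1]; linarith
  have hlarge : (d + 3 / 2) * √(Q - 1 : ℝ) < 5 / 3 * (√Q ^ d - 1) :=
    add_mul_lt_pow_sub_one (Real.le_sqrt_of_sq_le (by linarith))
      (by rw [ht, Real.sq_sqrt Q.cast_nonneg]) hd
  calc (d + Q / (Q - 1) : ℝ) ^ 2 * (Q - 1) ≤ (d + 3 / 2) ^ 2 * (Q - 1) := by gcongr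
    _ = ((d + 3 / 2) * √(Q - 1 : ℝ)) ^ 2 := by rw [mul_pow, ht]
    _ < (5 / 3 * (√Q ^ d - 1)) ^ 2 := by gcongr
    _ ≤ (5 / 3 * (√Q ^ d - 1)) ^ 2 * r :=
        le_mul_of_one_le_right (sq_nonneg _) (by exact_mod_cast hr)

theorem deltaTheta_add_div_mul_lt {d Q r h : ℕ} (hd : 0 < d) (hQ : 3 ≤ Q) (hr : 0 < r)
    (hh : 0 < h) (hhQ : h < Q) (hexc : ¬ IsExceptional d Q r) :
    (deltaTheta d + Q / (Q - 1)) * h < 5 / 3 * (√Q ^ d - 1) * √(h * r) := by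
  have hsd : 1 ≤ √(Q : ℝ) ^ d :=
    one_le_pow₀ (Real.one_le_sqrt.2 (by exact_mod_cast (by lia : 1 ≤ Q)))
  refine mul_lt_mul_sqrt_of_sq_mul_lt (B := Q - 1) (by linarith) (by exact_mod_cast hh)
    r.cast_nonneg (le_sub_iff_add_le.2 (by exact_mod_cast hhQ)) ?_
  unfold IsExceptional at hexc
  obtain rfl | rfl | hd3 : d = 1 ∨ d = 2 ∨ 3 ≤ d := by lia
  · rw [deltaTheta_one, zero_add, pow_one]
    exact div_sq_mul_lt (by lia) hr
  · rw [deltaTheta_of_ne_one (by lia), Nat.cast_two, Real.sq_sqrt Q.cast_nonneg]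
    exact two_add_div_sq_mul_lt (by lia) hr
  · rw [deltaTheta_of_ne_one (by lia)]
    exact add_div_sq_mul_lt hd3 hQ hr

theorem add_two_mul_sq_sub_one_lt {s : ℝ} (hs : 2 ≤ s) {d : ℕ} (hd : 3 ≤ d) :
    (d + 2) * (s ^ 2 - 1) < 5 / 3 * (s ^ d - 1) * s := by
  induction d, hd using Nat.le_induction with
  | base =>
    have hpos : 0 < (s - 1) * ((s - 2) * (s ^ 2 + 3 * s + 4) + 5) := by
      have : 0 ≤ s - 2 := by linarith
      have : 0 < s - 1 := by linarith
      positivity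
    push_cast
    linarith
  | succ d hd ih =>
    have hpow : s ^ 3 ≤ s ^ d := pow_le_pow_right₀ (by linarith) hd
    have hstep : s ^ d ≤ s ^ d * (s - 1) := le_mul_of_one_le_right (by positivity) (by linarith)
    have hmul : s ^ 3 * s ≤ s ^ d * (s - 1) * s := by gcongr; exact hpow.trans hstep
    have hsq : s ^ 2 - 1 ≤ s ^ 3 * s := by nlinarith [sq_nonneg (s ^ 2 - 1)]
    push_cast
    rw [pow_succ s d]
    linarith [(by positivity : 0 ≤ s ^ 3 * s)]

/- Compare `A` with `x ^ 2 / 2` if `x < 10 / 3 * (s - 1)`, and with `2 * (s ^ 2 - 1)` otherwise. -/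
theorem lt_sub_one_mul_of_le {A s x : ℝ} (hs : 2 ≤ s) (hsx : x < 10 / 3 ∨ 17 / 8 < s)
    (hx : 2 ≤ x) (hAs : A ≤ 2 * (s ^ 2 - 1)) (hAx : A ≤ x ^ 2 / 2) : A < 5 / 3 * (s - 1) * x := by
  rcases lt_or_ge x (10 / 3 * (s - 1)) with hlt | hge
  · calc A ≤ x / 2 * x := by linarith
      _ < 5 / 3 * (s - 1) * x := by gcongr; linarith
  · have hs' : 17 / 8 < s := hsx.resolve_left (by linarith)
    calc A ≤ (s - 1) * (2 * (s + 1)) := by linarith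
      _ < (s - 1) * (5 / 3 * x) := mul_lt_mul_of_pos_left (by linarith) (by linarith)
      _ = 5 / 3 * (s - 1) * x := by ring

theorem lt_sq_sub_one_mul_of_le {A s x : ℝ} (hs : 2 ≤ s) (hx : 2 ≤ x)
    (hAs : A ≤ 4 * (s ^ 2 - 1)) (hAx : A ≤ x ^ 2) : A < 5 / 3 * (s ^ 2 - 1) * x := by
  have hs2 : 3 ≤ s ^ 2 - 1 := by nlinarith
  rcases lt_or_ge (12 / 5) x with hlt | hge
  · calc A ≤ (s ^ 2 - 1) * 4 := by linarith
      _ < (s ^ 2 - 1) * (5 / 3 * x) := by gcongr; linarith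
      _ = 5 / 3 * (s ^ 2 - 1) * x := by ring
  · calc A ≤ x * x := by linarith
      _ < 5 / 3 * (s ^ 2 - 1) * x := by gcongr; linarith

theorem lt_mul_sqrt_of_le {d Q r h : ℕ} (hd : 0 < d) (hQ : 4 ≤ Q) (hr : 0 < r) (hQh : Q ≤ h)
    (hh : Q = 4 → h ≤ 6) {A : ℝ} (hAQ : A ≤ (deltaTheta d + 2) * (Q - 1))
    (hAh : A ≤ (deltaTheta d + 2) * (h / 4)) : A < 5 / 3 * (√Q ^ d - 1) * √(h * r) := by
  have hs : √(Q : ℝ) ^ 2 = Q := Real.sq_sqrt Q.cast_nonneg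
  have hx : √(h : ℝ) ^ 2 = h := Real.sq_sqrt h.cast_nonneg
  have hs2 : 2 ≤ √(Q : ℝ) := Real.le_sqrt_of_sq_le (by exact_mod_cast hQ)
  have hsx : √(Q : ℝ) ≤ √h := Real.sqrt_le_sqrt (by exact_mod_cast hQh)
  have hsd : 1 ≤ √(Q : ℝ) ^ d := one_le_pow₀ (by linarith)
  suffices hr1 : A < 5 / 3 * (√Q ^ d - 1) * √h by
    refine hr1.trans_le (mul_le_mul_of_nonneg_left (Real.sqrt_le_sqrt ?_) (by linarith))
    exact le_mul_of_one_le_right h.cast_nonneg (by exact_mod_cast hr)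
  obtain rfl | rfl | hd3 : d = 1 ∨ d = 2 ∨ 3 ≤ d := by lia
  · rw [deltaTheta_one] at hAQ hAh
    rw [pow_one]
    refine lt_sub_one_mul_of_le hs2 ?_ (hs2.trans hsx) (by linarith) (by linarith)
    rcases hQ.eq_or_lt with hQ4 | hQ5
    · refine .inl ((Real.sqrt_lt' (by norm_num)).2 ?_)
      linarith [Nat.cast_le_ofNat (α := ℝ).2 (hh hQ4.symm)]
    · refine .inr (Real.lt_sqrt_of_sq_lt ?_)
      linarith [Nat.ofNat_le_cast (α := ℝ).2 hQ5]
  · rw [deltaTheta_of_ne_one (by lia), Nat.cast_two] at hAQ hAh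
    exact lt_sq_sub_one_mul_of_le hs2 (hs2.trans hsx) (by linarith) (by linarith)
  · rw [deltaTheta_of_ne_one (by lia), ← hs] at hAQ
    calc A ≤ (d + 2) * (√Q ^ 2 - 1) := hAQ
      _ < 5 / 3 * (√Q ^ d - 1) * √Q := add_two_mul_sq_sub_one_lt hs2 hd3
      _ ≤ 5 / 3 * (√Q ^ d - 1) * √h := by gcongr

theorem div_sqrt_lt {g h r u Q d : ℕ} (hg : g = h * r * u) (hh : 0 < h) (hr : 0 < r)
    (hQ : 0 < Q) (hu : Q ^ d ≤ u) {A : ℝ} (hA : A < 5 / 3 * (√Q ^ d - 1) * √(h * r)) :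
    A / √g < 5 / 3 * ((√u - 1) / √u) := by
  have hu0 : 0 < √(u : ℝ) := Real.sqrt_pos.2 (by exact_mod_cast (pow_pos hQ d).trans_le hu)
  have hhr : 0 < √(h * r : ℝ) := Real.sqrt_pos.2 (by positivity)
  have hQu : √(Q : ℝ) ^ d ≤ √u := by
    refine Real.le_sqrt_of_sq_le ?_
    rw [pow_right_comm, Real.sq_sqrt Q.cast_nonneg]
    exact_mod_cast hu
  have hgsqrt : √(g : ℝ) = √(h * r) * √u := by
    rw [← Real.sqrt_mul (by positivity), hg]
    push_cast
    rfl
  rw [hgsqrt, ← mul_div_assoc, ← div_div]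
  refine div_lt_div_of_pos_right ((div_lt_iff₀ hhr).2 (hA.trans_le ?_)) hu0
  gcongr

end Estimates

section FixProb

variable {V : Type*} [Group V] [Finite V] {b : G →* MulAut V}

theorem three_le_card_of_injective [Finite G] [Nontrivial G] (hb : Function.Injective b) :
    3 ≤ Nat.card V := by
  by_contra! h
  have hfact : (Nat.card V - 1).factorial = 1 := Nat.factorial_eq_one.2 (by lia)
  exact ((card_le_factorial_of_injective hb).trans_eq hfact).not_gt Finite.one_lt_card

theorem one_div_fixProb_le_sub_one [Finite G] [Nontrivial V] (b : G →* MulAut V) :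
    1 / fixProb G b ≤ Nat.card V - 1 := by
  have hle := card_le_card_fixing_mul b
  have hpos : 0 < Nat.card {g : G // ∃ v, v ≠ 1 ∧ b g v = v} :=
    Nat.pos_of_mul_pos_right (Nat.card_pos.trans_le hle)
  rw [fixProb, one_div_div, div_le_iff₀ (by exact_mod_cast hpos), ← Nat.cast_pred Nat.card_pos,
    mul_comm]
  exact_mod_cast hle

theorem one_div_fixProb_le_div_four [Finite G] [Nontrivial V] (hb : Function.Injective b)
    (hcard : Nat.card V ≤ Nat.card G) : 1 / fixProb G b ≤ Nat.card G / 4 := by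
  rw [fixProb, one_div_div]
  gcongr
  exact_mod_cast four_le_card_fixing hb hcard

end FixProb

section CrownAlpha

variable {V : Type*} [CommGroup V] {a : G →* MulAut V}

/-- The number `α_U` of the crown of `V` when `H = G/C_G(V)` is nontrivial and `m = 0`, so that
`α_U` is a minimum without a cohomological term. Here `V` is given by the action `a`, and `δ_V(G)`
is counted in the chief series `S`. -/
noncomputable def crownAlpha (a : G →* MulAut V) (S : ChiefSeries G) : ℝ :=
  min
    ((deltaTheta (deltaIso a S) + endCard G a / (endCard G a - 1)) *
      (1 / fixProb (G ⧸ a.ker) (QuotientGroup.kerLift a)))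
    ((⌈deltaTheta (deltaIso a S) / dimEnd G a⌉ +
      (endCard G a : ℝ) ^ dimEnd G a / ((endCard G a : ℝ) ^ dimEnd G a - 1)) *
      Nat.card (G ⧸ a.ker))

theorem IsIrreducibleGGroup.kerLift (hirr : IsIrreducibleGGroup G a) :
    IsIrreducibleGGroup (G ⧸ a.ker) (QuotientGroup.kerLift a) :=
  ⟨hirr.1, fun W hW h => hirr.2 W hW fun g => h g⟩

theorem kerLift_ne_one (ha : a ≠ 1) : QuotientGroup.kerLift a ≠ 1 := fun h =>
  ha (MonoidHom.ext fun g => DFunLike.congr_fun h (g : G ⧸ a.ker))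

theorem nontrivial_quotient_ker (ha : a ≠ 1) : Nontrivial (G ⧸ a.ker) :=
  QuotientGroup.nontrivial_iff.2 (mt MonoidHom.ker_eq_top_iff.1 ha)

theorem relIndex_crownRadical_ker [Finite G] (hirr : IsIrreducibleGGroup G a) {N : Subgroup G}
    (hN : N ∈ crownNormals a) {U : Subgroup G} (hsup : crownSocle a = crownRadical a ⊔ U)
    (hinf : crownRadical a ⊓ U = ⊥) : (crownRadical a).relIndex a.ker = Nat.card U := by
  rw [← crownSocle_eq_ker hirr hN, hsup, Subgroup.relIndex_sup_left,
    ← Subgroup.inf_relIndex_right, hinf, Subgroup.relIndex_bot_left]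

theorem card_eq_mul_card_crownRadical_mul [Finite G] (hirr : IsIrreducibleGGroup G a)
    {N : Subgroup G} (hN : N ∈ crownNormals a) :
    Nat.card G = Nat.card (G ⧸ a.ker) * Nat.card (crownRadical a) *
      (crownRadical a).relIndex a.ker := by
  rw [mul_assoc, ← Subgroup.relIndex_bot_left,
    Subgroup.relIndex_mul_relIndex _ _ _ bot_le (crownRadical_le_ker hirr hN),
    Subgroup.relIndex_bot_left, mul_comm, ← Subgroup.index, Subgroup.card_mul_index]

variable [Finite V]

theorem crownAlpha_le_mul_card (hirr : IsIrreducibleGGroup G a) (S : ChiefSeries G) :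
    crownAlpha a S ≤ (deltaTheta (deltaIso a S) + Nat.card V / (Nat.card V - 1)) *
      Nat.card (G ⧸ a.ker) := by
  rw [crownAlpha, ← Nat.cast_pow, hirr.endCard_pow_dimEnd]
  refine (min_le_right _ _).trans ?_
  gcongr
  exact ceil_deltaTheta_div_le _ _

theorem crownAlpha_le_mul_of_one_div_fixProb_le (hirr : IsIrreducibleGGroup G a)
    (S : ChiefSeries G) {c : ℝ} (hc : 1 / fixProb (G ⧸ a.ker) (QuotientGroup.kerLift a) ≤ c) :
    crownAlpha a S ≤ (deltaTheta (deltaIso a S) + 2) * c := by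
  have hq : (2 : ℝ) ≤ endCard G a := Nat.ofNat_le_cast.2 hirr.one_lt_endCard
  have hdiv : (endCard G a / (endCard G a - 1) : ℝ) ≤ 2 := by
    rw [div_le_iff₀ (by linarith)]
    linarith
  have hprob : 0 ≤ 1 / fixProb (G ⧸ a.ker) (QuotientGroup.kerLift a) := by
    unfold fixProb
    positivity
  refine (min_le_left _ _).trans ?_
  gcongr
  exact add_nonneg (deltaTheta_nonneg _) two_pos.le

theorem crownAlpha_lt [Finite G] (hirr : IsIrreducibleGGroup G a) (ha : a ≠ 1)
    {N : Subgroup G} (hN : N ∈ crownNormals a) (S : ChiefSeries G)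
    (hexc : ¬ (Nat.card (G ⧸ a.ker) < Nat.card V ∧
      IsExceptional (deltaIso a S) (endCard G a ^ dimEnd G a) (Nat.card (crownRadical a)))) :
    crownAlpha a S < 5 / 3 * (√(Nat.card V) ^ deltaIso a S - 1) *
      √(Nat.card (G ⧸ a.ker) * Nat.card (crownRadical a)) := by
  rw [hirr.endCard_pow_dimEnd] at hexc
  have hδ := deltaIso_pos hirr hN S
  have := nontrivial_quotient_ker ha
  have : Nontrivial V := hirr.1
  have hinj := QuotientGroup.kerLift_injective a
  have hfact := card_le_factorial_of_injective hinj
  have hV := three_le_card_of_injective hinj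
  rcases lt_or_ge (Nat.card (G ⧸ a.ker)) (Nat.card V) with hlt | hge
  · exact (crownAlpha_le_mul_card hirr S).trans_lt
      (deltaTheta_add_div_mul_lt hδ hV Nat.card_pos Nat.card_pos hlt fun h => hexc ⟨hlt, h⟩)
  · have hV4 : 4 ≤ Nat.card V := by
      refine hV.lt_of_ne' fun h3 => ?_
      rw [h3] at hfact hge
      exact (hge.trans hfact).not_gt (by decide)
    refine lt_mul_sqrt_of_le hδ hV4 Nat.card_pos hge (fun h4 => ?_)
      (crownAlpha_le_mul_of_one_div_fixProb_le hirr S (one_div_fixProb_le_sub_one _))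
      (crownAlpha_le_mul_of_one_div_fixProb_le hirr S (one_div_fixProb_le_div_four hinj hge))
    rwa [h4] at hfact

theorem alpha_div_sqrt_lt_general [Finite G] (hirr : IsIrreducibleGGroup G a) (ha : a ≠ 1)
    {U : Subgroup G} (hU : U ≠ ⊥)
    (hcrown : crownSocle a = crownRadical a ⊔ U ∧ crownRadical a ⊓ U = ⊥) (S : ChiefSeries G)
    (hexc : ¬ (Nat.card (G ⧸ a.ker) < Nat.card V ∧
      IsExceptional (deltaIso a S) (endCard G a ^ dimEnd G a) (Nat.card (crownRadical a)))) :
    crownAlpha a S / √(Nat.card G) < 5 / 3 * ((√(Nat.card U) - 1) / √(Nat.card U)) := by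
  obtain ⟨N, hN⟩ : (crownNormals a).Nonempty := by
    by_contra! h
    exact hU (by rw [← hcrown.2, crownRadical, h, sInf_empty, top_inf_eq])
  have hUcard := relIndex_crownRadical_ker hirr hN hcrown.1 hcrown.2
  have hGcard := card_eq_mul_card_crownRadical_mul hirr hN
  rw [hUcard] at hGcard
  exact div_sqrt_lt hGcard Nat.card_pos Nat.card_pos Nat.card_pos
    (hUcard ▸ card_pow_deltaIso_le hirr S) (crownAlpha_lt hirr ha hN S hexc)

end CrownAlpha

/-- **Lemma 5.1**: let `G` be a finite soluble group with trivial Frattini subgroup, let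
`U`, `V` be as in Lemma 2.1 with `V` abelian and non-central, and let `α_U` be as in
Proposition 3.4.  Then `α_U/√|G| < (5/3)·(√|U| - 1)/√|U|`, except possibly when
`|H| < |V|` and one of the following holds:
(1) `δ = 2`, `qⁿ = 4`, `|R_G(V)| = 1`; (2) `δ = 2`, `qⁿ = 3`, `|R_G(V)| ≤ 2`;
(3) `δ = 1`, `4 ≤ qⁿ ≤ 7`, `|R_G(V)| = 1`; (4) `δ = 1`, `qⁿ = 3`, `|R_G(V)| ≤ 3`. -/
theorem alpha_div_sqrt_lt (G : Type) [Group G] [Finite G]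
    (hsol : IsSolvable G) (hfrat : frattini G = ⊥)
    (V : Type) [Group V] (a : G →* MulAut V) (X Y : Subgroup G)
    (hchief : IsChiefFactorPair G X Y) (hrep : RepresentsFactor G a X Y)
    (hab : ∀ x y : V, x * y = y * x) (hnc : ¬ IsCentralFactor G X Y)
    (U : Subgroup G) [U.Normal] (hUne : U ≠ ⊥)
    (hcrown : crownSocle a = crownRadical a ⊔ U ∧ crownRadical a ⊓ U = ⊥)
    (S : ChiefSeries G) (α : ℝ)
    (hα : α = (if Nat.card (G ⧸ a.ker) = 1 then
        ∑ i ∈ Finset.range (deltaIso a S),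
          (endCard G a : ℝ) ^ deltaIso a S /
            ((endCard G a : ℝ) ^ deltaIso a S - (endCard G a : ℝ) ^ i)
      else
        min
          (((deltaIso a S : ℝ) * (if deltaIso a S = 1 then (0:ℝ) else 1) +
              (h1Dim (G ⧸ a.ker) (QuotientGroup.kerLift a) : ℝ) +
              (endCard G a : ℝ) / ((endCard G a : ℝ) - 1)) *
            (1 / fixProb (G ⧸ a.ker) (QuotientGroup.kerLift a)))
          ((((⌈((deltaIso a S : ℝ) * (if deltaIso a S = 1 then (0:ℝ) else 1) /
                (dimEnd G a : ℝ))⌉ : ℤ) : ℝ) +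
              (endCard G a : ℝ) ^ dimEnd G a /
                ((endCard G a : ℝ) ^ dimEnd G a - 1)) *
            (Nat.card (G ⧸ a.ker) : ℝ))))
    (hexc : ¬ (Nat.card (G ⧸ a.ker) < Nat.card V ∧
      ((deltaIso a S = 2 ∧ endCard G a ^ dimEnd G a = 4 ∧
          Nat.card (crownRadical a) = 1) ∨
       (deltaIso a S = 2 ∧ endCard G a ^ dimEnd G a = 3 ∧
          Nat.card (crownRadical a) ≤ 2) ∨
       (deltaIso a S = 1 ∧ 4 ≤ endCard G a ^ dimEnd G a ∧
          endCard G a ^ dimEnd G a ≤ 7 ∧ Nat.card (crownRadical a) = 1) ∨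
       (deltaIso a S = 1 ∧ endCard G a ^ dimEnd G a = 3 ∧
          Nat.card (crownRadical a) ≤ 3)))) :
    α / Real.sqrt (Nat.card G) <
      5 / 3 * ((Real.sqrt (Nat.card U) - 1) / Real.sqrt (Nat.card U)) := by
  have := hchief.1
  let _ : CommGroup V := { ‹Group V› with mul_comm := hab }
  have := hrep.finite
  have hirr := hrep.isIrreducibleGGroup hchief
  have ha := hrep.ne_one hnc
  have := nontrivial_quotient_ker ha
  have hH1 := h1Dim_eq_zero hirr.kerLift (QuotientGroup.kerLift_injective a) (kerLift_ne_one ha)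
  rw [if_neg Finite.one_lt_card.ne', hH1, Nat.cast_zero, add_zero] at hα
  exact hα ▸ alpha_div_sqrt_lt_general hirr ha hUne hcrown S hexc

end ChebotarevPaper
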